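/- arXiv:2206.12919 — 5 statements merged into one kernel-verified Lean document; each statement's English description precedes it below -/
import Mathlib

section
/- Suppose E[ε | Z, U] = 0 almost surely, W is conditionally independent of the pair (A, Z) given U, and h₀ : 𝓐 × 𝓦 → ℝ is measurable and integrable (h₀(A,W) ∈ L¹) satisfying E[k₀(A,U) − h₀(A,W) | A, U] = 0 almost surely. Then E[Y − h₀(A,W) | Z] = 0 almost surely. -/
open MeasureTheory ProbabilityTheory

/-!
Write `σ(X)` for the σ-algebra generated by `X`. By Doob's criterion, `m₁` and `m₂` are
conditionally independent given `m'` iff enlarging `m'` by `m₂` does not change the conditional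
probabilities of the events in `m₁`. With the tower property this yields weak union, which turns
`W ⫫ (A, Z) | U` into `W ⫫ Z | (A, U)`. The criterion extends to integrable functions that are
measurable with respect to `m₁ ⊔ m'`; applied to `k₀(A, U) - h₀(A, W)`, it says that conditioning on
`σ(Z, A, U)` gives the same result as conditioning on `σ(A, U)`, namely zero by the bridge
condition. Both this residual and `ε` thus have zero conditional expectation given a σ-algebra
containing `σ(Z)`, and the tower property concludes.
-/

section PiSystem

variable {Ω : Type*}

lemma isPiSystem_image2_inter {S T : Set (Set Ω)} (hS : IsPiSystem S) (hT : IsPiSystem T) :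
    IsPiSystem (Set.image2 (· ∩ ·) S T) := by
  rintro _ ⟨s, hs, t, ht, rfl⟩ _ ⟨s', hs', t', ht', rfl⟩ hne
  have hinter : s ∩ t ∩ (s' ∩ t') = s ∩ s' ∩ (t ∩ t') := Set.inter_inter_inter_comm ..
  simp only [hinter] at hne ⊢
  exact ⟨_, hS s hs s' hs' hne.left, _, hT t ht t' ht' hne.right, rfl⟩

lemma sup_eq_generateFrom_image2_inter (m₁ m₂ : MeasurableSpace Ω) :
    m₁ ⊔ m₂ = MeasurableSpace.generateFrom
      (Set.image2 (· ∩ ·) {s | MeasurableSet[m₁] s} {t | MeasurableSet[m₂] t}) := by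
  refine le_antisymm (sup_le (fun s hs ↦ ?_) fun t ht ↦ ?_)
    (MeasurableSpace.generateFrom_le ?_)
  · exact .basic _ ⟨s, hs, .univ, .univ, Set.inter_univ s⟩
  · exact .basic _ ⟨.univ, .univ, t, ht, Set.univ_inter t⟩
  · rintro _ ⟨s, hs, t, ht, rfl⟩
    exact .inter (le_sup_left (b := m₂) s hs) (le_sup_right (a := m₁) t ht)

variable {m₁ m₂ mΩ : MeasurableSpace Ω} {μ : Measure Ω}
  {E : Type*} [NormedAddCommGroup E] [NormedSpace ℝ E] {f g : Ω → E}

lemma setIntegral_eq_of_isPiSystem {m : MeasurableSpace Ω} (hm : m ≤ mΩ) {S : Set (Set Ω)}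
    (hmS : m = MeasurableSpace.generateFrom S) (hS : IsPiSystem S)
    (hf : Integrable f μ) (hg : Integrable g μ) (huniv : ∫ ω, f ω ∂μ = ∫ ω, g ω ∂μ)
    (h : ∀ s ∈ S, ∫ ω in s, f ω ∂μ = ∫ ω in s, g ω ∂μ) {s : Set Ω} (hs : MeasurableSet[m] s) :
    ∫ ω in s, f ω ∂μ = ∫ ω in s, g ω ∂μ := by
  induction s, hs using MeasurableSpace.induction_on_inter hmS hS with
  | empty => simp
  | basic t ht => exact h t ht
  | compl t ht ih =>
    rw [setIntegral_compl (hm t ht) hf, setIntegral_compl (hm t ht) hg, ih, huniv]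
  | iUnion t hdisj ht ih =>
    rw [integral_iUnion (fun i ↦ hm _ (ht i)) hdisj hf.integrableOn,
      integral_iUnion (fun i ↦ hm _ (ht i)) hdisj hg.integrableOn]
    simp_rw [ih]

lemma setIntegral_eq_of_forall_setIntegral_inter_eq (hm₁ : m₁ ≤ mΩ) (hm₂ : m₂ ≤ mΩ)
    (hf : Integrable f μ) (hg : Integrable g μ)
    (h : ∀ s t, MeasurableSet[m₁] s → MeasurableSet[m₂] t →
      ∫ ω in s ∩ t, f ω ∂μ = ∫ ω in s ∩ t, g ω ∂μ)
    {s : Set Ω} (hs : MeasurableSet[m₁ ⊔ m₂] s) :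
    ∫ ω in s, f ω ∂μ = ∫ ω in s, g ω ∂μ := by
  refine setIntegral_eq_of_isPiSystem (sup_le hm₁ hm₂) (sup_eq_generateFrom_image2_inter m₁ m₂)
    (isPiSystem_image2_inter m₁.isPiSystem_measurableSet m₂.isPiSystem_measurableSet) hf hg ?_ ?_ hs
  · simpa using h .univ .univ .univ .univ
  · rintro _ ⟨s, hs, t, ht, rfl⟩
    exact h s t hs ht

end PiSystem

section CondExp

variable {Ω : Type*} {m m' m₂ mΩ : MeasurableSpace Ω} {μ : Measure Ω}
  {E : Type*} [NormedAddCommGroup E] [NormedSpace ℝ E] {f : Ω → E} {s : Set Ω}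

lemma integrable_condExp_indicator_smul (m : MeasurableSpace Ω) (s : Set Ω)
    (hf : Integrable f μ) : Integrable (μ⟦s | m⟧ • f) μ := by
  refine hf.bdd_smul 1 integrable_condExp.aestronglyMeasurable
    (ae_bdd_norm_condExp_of_ae_bdd_norm (.of_forall fun ω ↦ ?_))
  by_cases hω : ω ∈ s <;> simp [hω]

variable [CompleteSpace E]

lemma condExp_ae_eq_zero_of_le (hmm' : m ≤ m') (hm' : m' ≤ mΩ) [SigmaFinite (μ.trim hm')]
    (hf : μ[f | m'] =ᵐ[μ] 0) : μ[f | m] =ᵐ[μ] 0 :=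
  calc μ[f | m]
    _ =ᵐ[μ] μ[μ[f | m'] | m] := (condExp_condExp_of_le hmm' hm').symm
    _ =ᵐ[μ] μ[(0 : Ω → E) | m] := condExp_congr_ae hf
    _ = 0 := condExp_zero

variable [IsFiniteMeasure μ]

lemma condExp_indicator_of_stronglyMeasurable (hs : MeasurableSet s)
    (hf : StronglyMeasurable[m] f) (hfint : Integrable f μ) :
    μ[s.indicator f | m] =ᵐ[μ] μ⟦s | m⟧ • f := by
  have hsmul : s.indicator f = s.indicator (fun _ ↦ (1 : ℝ)) • f := by
    ext ω; by_cases hω : ω ∈ s <;> simp [hω]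
  rw [hsmul]
  exact condExp_smul_of_aestronglyMeasurable_right ((integrable_const 1).indicator hs)
    (hsmul ▸ hfint.indicator hs) hf.aestronglyMeasurable

lemma condExp_sup_ae_eq_iff_condExp_indicator (hm' : m' ≤ mΩ) (hm₂ : m₂ ≤ mΩ)
    (hf : Integrable f μ) :
    μ[f | m₂ ⊔ m'] =ᵐ[μ] μ[f | m'] ↔
      ∀ s, MeasurableSet[m₂] s → μ[s.indicator f | m'] =ᵐ[μ] μ⟦s | m'⟧ • μ[f | m'] := by
  have hpull : ∀ s, MeasurableSet[m₂] s →
      μ[s.indicator μ[f | m'] | m'] =ᵐ[μ] μ⟦s | m'⟧ • μ[f | m'] := fun s hs ↦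
    condExp_indicator_of_stronglyMeasurable (hm₂ s hs) stronglyMeasurable_condExp integrable_condExp
  constructor
  · intro h s hs
    calc μ[s.indicator f | m']
      _ =ᵐ[μ] μ[μ[s.indicator f | m₂ ⊔ m'] | m'] :=
        (condExp_condExp_of_le le_sup_right (sup_le hm₂ hm')).symm
      _ =ᵐ[μ] μ[s.indicator μ[f | m₂ ⊔ m'] | m'] :=
        condExp_congr_ae (condExp_indicator hf (le_sup_left (b := m') s hs))
      _ =ᵐ[μ] μ[s.indicator μ[f | m'] | m'] := condExp_congr_ae h.indicator
      _ =ᵐ[μ] μ⟦s | m'⟧ • μ[f | m'] := hpull s hs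
  · intro h
    refine (ae_eq_condExp_of_forall_setIntegral_eq (sup_le hm₂ hm') hf
      (fun _ _ _ ↦ integrable_condExp.integrableOn) (fun S hS _ ↦ ?_)
      (stronglyMeasurable_condExp.mono (le_sup_right : m' ≤ m₂ ⊔ m')).aestronglyMeasurable).symm
    refine setIntegral_eq_of_forall_setIntegral_inter_eq hm₂ hm' integrable_condExp hf
      (fun s t hs ht ↦ ?_) hS
    calc ∫ ω in s ∩ t, (μ[f | m']) ω ∂μ
      _ = ∫ ω in t, s.indicator μ[f | m'] ω ∂μ := by
        rw [setIntegral_indicator (hm₂ s hs), Set.inter_comm]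
      _ = ∫ ω in t, (μ[s.indicator μ[f | m'] | m']) ω ∂μ :=
        (setIntegral_condExp hm' (integrable_condExp.indicator (hm₂ s hs)) ht).symm
      _ = ∫ ω in t, (μ[s.indicator f | m']) ω ∂μ :=
        integral_congr_ae (ae_restrict_of_ae ((hpull s hs).trans (h s hs).symm))
      _ = ∫ ω in t, s.indicator f ω ∂μ :=
        setIntegral_condExp hm' (hf.indicator (hm₂ s hs)) ht
      _ = ∫ ω in s ∩ t, f ω ∂μ := by
        rw [setIntegral_indicator (hm₂ s hs), Set.inter_comm]

end CondExp

section CondIndep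

variable {Ω : Type*} {m' m'' m₁ m₂ m₃ mΩ : MeasurableSpace Ω} [StandardBorelSpace Ω]
  {μ : Measure Ω} [IsFiniteMeasure μ]

lemma condIndep_iff_condExp_sup_ae_eq (hm' : m' ≤ mΩ) (hm₁ : m₁ ≤ mΩ) (hm₂ : m₂ ≤ mΩ) :
    CondIndep m' m₁ m₂ hm' μ ↔
      ∀ s, MeasurableSet[m₁] s → μ⟦s | m₂ ⊔ m'⟧ =ᵐ[μ] μ⟦s | m'⟧ := by
  have hinter (s t : Set Ω) : (s ∩ t).indicator (fun _ ↦ (1 : ℝ)) =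
      t.indicator (s.indicator fun _ ↦ 1) := by
    rw [Set.indicator_indicator, Set.inter_comm]
  have hcriterion (s : Set Ω) (hs : MeasurableSet[m₁] s) :=
    condExp_sup_ae_eq_iff_condExp_indicator hm' hm₂
      ((integrable_const (μ := μ) (1 : ℝ)).indicator (hm₁ s hs))
  simp only [smul_eq_mul] at hcriterion
  rw [condIndep_iff _ _ _ hm' hm₁ hm₂]
  refine ⟨fun h s hs ↦ (hcriterion s hs).2 fun t ht ↦ ?_, fun h s t hs ht ↦ ?_⟩
  · rw [← hinter, mul_comm]
    exact h s t hs ht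
  · rw [hinter, mul_comm]
    exact (hcriterion s hs).1 (h s hs) t ht

lemma condIndep_of_condIndep_of_le_of_le_sup (hm' : m' ≤ mΩ) (hm₁ : m₁ ≤ mΩ)
    (hm₂ : m₂ ≤ mΩ) (hle : m' ≤ m'') (hle_sup : m'' ≤ m₂ ⊔ m') (h : CondIndep m' m₁ m₂ hm' μ) :
    CondIndep m'' m₁ m₂ (hle_sup.trans (sup_le hm₂ hm')) μ := by
  have hm'' : m'' ≤ mΩ := hle_sup.trans (sup_le hm₂ hm')
  rw [condIndep_iff_condExp_sup_ae_eq hm' hm₁ hm₂] at h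
  rw [condIndep_iff_condExp_sup_ae_eq hm'' hm₁ hm₂]
  intro s hs
  have hsup : m₂ ⊔ m'' = m₂ ⊔ m' :=
    le_antisymm (sup_le le_sup_left hle_sup) (sup_le_sup_left hle m₂)
  calc μ⟦s | m₂ ⊔ m''⟧
    _ = μ⟦s | m₂ ⊔ m'⟧ := by rw [hsup]
    _ =ᵐ[μ] μ⟦s | m'⟧ := h s hs
    _ = μ[μ⟦s | m'⟧ | m''] := (condExp_of_stronglyMeasurable hm''
        (stronglyMeasurable_condExp.mono hle) integrable_condExp).symm
    _ =ᵐ[μ] μ[μ⟦s | m₂ ⊔ m'⟧ | m''] := condExp_congr_ae (h s hs).symm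
    _ =ᵐ[μ] μ⟦s | m''⟧ := condExp_condExp_of_le hle_sup (sup_le hm₂ hm')

variable {E : Type*} [NormedAddCommGroup E] [NormedSpace ℝ E] [CompleteSpace E] {f : Ω → E}

lemma condExp_sup_ae_eq_of_condIndep (hm' : m' ≤ mΩ) (hm₁ : m₁ ≤ mΩ) (hm₂ : m₂ ≤ mΩ)
    (h : CondIndep m' m₁ m₂ hm' μ) (hf : StronglyMeasurable[m₁ ⊔ m'] f)
    (hfint : Integrable f μ) : μ[f | m₂ ⊔ m'] =ᵐ[μ] μ[f | m'] := by
  rw [condExp_sup_ae_eq_iff_condExp_indicator hm' hm₂ hfint]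
  intro s hs
  -- Doob's criterion is used with `m₁` and `m₂` exchanged: only the event `s` is involved, so `f`
  -- need not be approximated by simple functions.
  have hprob : μ⟦s | m₁ ⊔ m'⟧ =ᵐ[μ] μ⟦s | m'⟧ :=
    (condIndep_iff_condExp_sup_ae_eq hm' hm₂ hm₁).1 h.symm s hs
  calc μ[s.indicator f | m']
    _ =ᵐ[μ] μ[μ[s.indicator f | m₁ ⊔ m'] | m'] :=
      (condExp_condExp_of_le le_sup_right (sup_le hm₁ hm')).symm
    _ =ᵐ[μ] μ[μ⟦s | m₁ ⊔ m'⟧ • f | m'] :=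
      condExp_congr_ae (condExp_indicator_of_stronglyMeasurable (hm₂ s hs) hf hfint)
    _ =ᵐ[μ] μ[μ⟦s | m'⟧ • f | m'] := condExp_congr_ae (hprob.smul .rfl)
    _ =ᵐ[μ] μ⟦s | m'⟧ • μ[f | m'] :=
      condExp_smul_of_aestronglyMeasurable_left stronglyMeasurable_condExp.aestronglyMeasurable
        (integrable_condExp_indicator_smul m' s hfint) hfint

lemma condExp_sup_sup_ae_eq_of_condIndep_sup (hm' : m' ≤ mΩ) (hm₁ : m₁ ≤ mΩ) (hm₂ : m₂ ≤ mΩ)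
    (hm₃ : m₃ ≤ mΩ) (h : CondIndep m' m₁ (m₂ ⊔ m₃) hm' μ)
    (hf : StronglyMeasurable[m₁ ⊔ (m₂ ⊔ m')] f) (hfint : Integrable f μ) :
    μ[f | m₃ ⊔ (m₂ ⊔ m')] =ᵐ[μ] μ[f | m₂ ⊔ m'] := by
  have hweak : CondIndep (m₂ ⊔ m') m₁ (m₂ ⊔ m₃) (sup_le hm₂ hm') μ :=
    condIndep_of_condIndep_of_le_of_le_sup hm' hm₁ (sup_le hm₂ hm₃)
      le_sup_right (sup_le_sup_right le_sup_left m') h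
  exact condExp_sup_ae_eq_of_condIndep (sup_le hm₂ hm') hm₁ hm₃
    (condIndep_of_condIndep_of_le_right hweak le_sup_right) hf hfint

end CondIndep

theorem icc_lemma3_obs_npiv_outcome_general
    {Ω 𝓐 𝓤 𝓩 𝓦 E : Type*}
    [MeasurableSpace Ω] [StandardBorelSpace Ω]
    [MeasurableSpace 𝓐] [MeasurableSpace 𝓤] [MeasurableSpace 𝓩] [MeasurableSpace 𝓦]
    [NormedAddCommGroup E] [NormedSpace ℝ E] [CompleteSpace E]
    (P : Measure Ω) [IsFiniteMeasure P]
    (A : Ω → 𝓐) (U : Ω → 𝓤) (Z : Ω → 𝓩) (W : Ω → 𝓦) (ε : Ω → E)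
    (hA : Measurable A) (hU : Measurable U) (hZ : Measurable Z) (hW : Measurable W)
    (hεInt : Integrable ε P)
    (k₀ : 𝓐 × 𝓤 → E) (hk₀ : StronglyMeasurable k₀)
    (hk₀Int : Integrable (fun ω ↦ k₀ (A ω, U ω)) P)
    (hcond : P[ε | MeasurableSpace.comap (fun ω ↦ (Z ω, U ω)) inferInstance] =ᵐ[P] 0)
    (hWindep : CondIndepFun (MeasurableSpace.comap U inferInstance) hU.comap_le
      W (fun ω ↦ (A ω, Z ω)) P)
    (h₀ : 𝓐 × 𝓦 → E) (hh₀ : StronglyMeasurable h₀)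
    (hh₀Int : Integrable (fun ω ↦ h₀ (A ω, W ω)) P)
    (hbridge : P[(fun ω ↦ k₀ (A ω, U ω) - h₀ (A ω, W ω)) |
      MeasurableSpace.comap (fun ω ↦ (A ω, U ω)) inferInstance] =ᵐ[P] 0) :
    P[(fun ω ↦ (k₀ (A ω, U ω) + ε ω) - h₀ (A ω, W ω)) |
      MeasurableSpace.comap Z inferInstance] =ᵐ[P] 0 := by
  rw [condIndepFun_iff_condIndep] at hWindep
  simp only [Prod.instMeasurableSpace, MeasurableSpace.comap_prodMk] at hcond hWindep hbridge
  have hres_meas : StronglyMeasurable[MeasurableSpace.comap W inferInstance ⊔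
      (MeasurableSpace.comap A inferInstance ⊔ MeasurableSpace.comap U inferInstance)]
      (fun ω ↦ k₀ (A ω, U ω) - h₀ (A ω, W ω)) := by
    refine (hk₀.comp_measurable (.prodMk ?_ ?_)).sub (hh₀.comp_measurable (.prodMk ?_ ?_)) <;>
      rw [measurable_iff_comap_le] <;> order
  have hres : P[(fun ω ↦ k₀ (A ω, U ω) - h₀ (A ω, W ω)) |
      MeasurableSpace.comap Z inferInstance] =ᵐ[P] 0 :=
    condExp_ae_eq_zero_of_le le_sup_left
      (sup_le hZ.comap_le (sup_le hA.comap_le hU.comap_le))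
      ((condExp_sup_sup_ae_eq_of_condIndep_sup hU.comap_le hW.comap_le hA.comap_le hZ.comap_le
        hWindep hres_meas (hk₀Int.sub hh₀Int)).trans hbridge)
  have hnoise : P[ε | MeasurableSpace.comap Z inferInstance] =ᵐ[P] 0 :=
    condExp_ae_eq_zero_of_le le_sup_left (sup_le hZ.comap_le hU.comap_le) hcond
  calc P[fun ω ↦ (k₀ (A ω, U ω) + ε ω) - h₀ (A ω, W ω) | MeasurableSpace.comap Z inferInstance]
    _ = P[(fun ω ↦ k₀ (A ω, U ω) - h₀ (A ω, W ω)) + ε | MeasurableSpace.comap Z inferInstance] := by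
      simp only [add_sub_right_comm, Pi.add_def]
    _ =ᵐ[P] _ := condExp_add (hk₀Int.sub hh₀Int) hεInt _
    _ =ᵐ[P] 0 + 0 := hres.add hnoise
    _ = 0 := add_zero 0

/-- **Lemma 3 (ICC paper).** Under the separable outcome model with
`E[ε | Z, U] = 0` a.s. and `W ⫫ (A, Z) | U`, any structural outcome bridge
function `h₀` (i.e. `E[k₀(A,U) − h₀(A,W) | A, U] = 0` a.s.) satisfies the
observable conditional moment restriction `E[Y − h₀(A,W) | Z] = 0` a.s. -/
theorem icc_lemma3_obs_npiv_outcome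
    {Ω 𝓐 𝓤 𝓩 𝓦 : Type*}
    [MeasurableSpace Ω] [StandardBorelSpace Ω] [Nonempty Ω]
    [MeasurableSpace 𝓐] [MeasurableSpace 𝓤] [MeasurableSpace 𝓩] [MeasurableSpace 𝓦]
    (P : Measure Ω) [IsProbabilityMeasure P]
    (A : Ω → 𝓐) (U : Ω → 𝓤) (Z : Ω → 𝓩) (W : Ω → 𝓦) (ε : Ω → ℝ)
    (hA : Measurable A) (hU : Measurable U) (hZ : Measurable Z) (hW : Measurable W)
    (hε : Measurable ε) (hεInt : Integrable ε P)
    (k₀ : 𝓐 × 𝓤 → ℝ) (hk₀ : Measurable k₀)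
    (hk₀Int : Integrable (fun ω => k₀ (A ω, U ω)) P)
    -- E[ε | Z, U] = 0 almost surely
    (hcond : P[ε | MeasurableSpace.comap (fun ω => (Z ω, U ω)) inferInstance] =ᵐ[P] 0)
    -- W ⫫ (A, Z) | U
    (hWindep : CondIndepFun (MeasurableSpace.comap U inferInstance) hU.comap_le
      W (fun ω => (A ω, Z ω)) P)
    (h₀ : 𝓐 × 𝓦 → ℝ) (hh₀ : Measurable h₀)
    (hh₀Int : Integrable (fun ω => h₀ (A ω, W ω)) P)
    -- outcome bridge condition: E[k₀(A,U) − h₀(A,W) | A, U] = 0 a.s.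
    (hbridge : P[(fun ω => k₀ (A ω, U ω) - h₀ (A ω, W ω)) |
      MeasurableSpace.comap (fun ω => (A ω, U ω)) inferInstance] =ᵐ[P] 0) :
    -- observable moment restriction: E[Y − h₀(A,W) | Z] = 0 a.s., where Y = k₀(A,U) + ε
    P[(fun ω => (k₀ (A ω, U ω) + ε ω) - h₀ (A ω, W ω)) |
      MeasurableSpace.comap Z inferInstance] =ᵐ[P] 0 := by
  exact icc_lemma3_obs_npiv_outcome_general P A U Z W ε hA hU hZ hW hεInt k₀ hk₀.stronglyMeasurable
    hk₀Int hcond hWindep h₀ hh₀.stronglyMeasurable hh₀Int hbridge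
end

section
/- Suppose A and ε are conditionally independent given (η, U), and p : 𝓔 × ℝ × 𝓤 → ℝ is a nonnegative measurable conditional density of ε given (η, U) with respect to a σ-finite measure ν on 𝓔, that is, for every bounded measurable ψ : 𝓔 × ℝ × 𝓤 → ℝ one has E[ψ(ε, η, U)] = E[∫_𝓔 ψ(e, η, U) p(e, η, U) dν(e)]. Define k(a, v, u) := ∫_𝓔 g(a, u, e) p(e, v, u) dν(e), assuming all displayed integrands are integrable. Then: (a) E[Y | A, η, U] = k(A, η, U) almost surely; and (b) the regression identity E[∫_𝓐 k(a, η, U) π(a) dμ_A(a)] = J := E[∫_𝓐 g(a, U, ε) π(a) dμ_A(a)] holds. -/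
open MeasureTheory ProbabilityTheory

/-!
The defining identity of a conditional density `p`, tested on indicators, says that the law of
`(V, ε)` is the law of `V` composed with the kernel `v ↦ p(·, v) ν`. Conditional independence of
`A` and `ε` given `V` therefore makes `(e, a, v) ↦ p(e, v)` a conditional density of `ε` given
`(A, V)`, and (a) is integration against it. For (b), disintegrate the law of `(V, ε)` and apply
Fubini to `μ_A` and the kernel, fibre by fibre over `V`.
-/

section CompProd

variable {α β γ E : Type*} {mα : MeasurableSpace α} {mβ : MeasurableSpace β}
  {mγ : MeasurableSpace γ} [NormedAddCommGroup E] {μ : Measure α} {κ : Kernel α β} {ρ : Measure γ}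

lemma ae_measure_univ_eq_one_of_fst_compProd_eq [SigmaFinite μ] [IsSFiniteKernel κ]
    (h : (μ ⊗ₘ κ).fst = μ) : ∀ᵐ x ∂μ, κ x Set.univ = 1 := by
  refine ae_eq_of_forall_setLIntegral_eq_of_sigmaFinite
    (κ.measurable_coe .univ) measurable_const fun s hs _ ↦ ?_
  calc ∫⁻ x in s, κ x Set.univ ∂μ
      = (μ ⊗ₘ κ) (s ×ˢ Set.univ) := (Measure.compProd_apply_prod hs .univ).symm
    _ = (μ ⊗ₘ κ).fst s := by rw [Measure.fst_apply hs, Set.prod_univ]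
    _ = ∫⁻ _ in s, 1 ∂μ := by rw [h, setLIntegral_one]

lemma condDistrib_ae_eq_of_map_eq_compProd_of_isSFiniteKernel [StandardBorelSpace β] [Nonempty β]
    {P : Measure γ} [IsFiniteMeasure P] {X : γ → α} {Y : γ → β} (hY : Measurable Y)
    [IsSFiniteKernel κ] (h : P.map (fun ω ↦ (X ω, Y ω)) = P.map X ⊗ₘ κ) :
    condDistrib Y X P =ᵐ[P.map X] κ := by
  classical
  have mass_eq_one : ∀ᵐ x ∂P.map X, κ x Set.univ = 1 :=
    ae_measure_univ_eq_one_of_fst_compProd_eq (by rw [← h, Measure.fst_map_prodMk hY])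
  let κ' : Kernel α β :=
    Kernel.piecewise (κ.measurable_coe .univ (measurableSet_singleton 1)) κ 0
  have : IsFiniteKernel κ' := ⟨1, by simp, fun x ↦ by
    by_cases hx : κ x Set.univ = 1 <;> simp [κ', Kernel.piecewise_apply, hx]⟩
  have hκ' : κ =ᵐ[P.map X] κ' := by
    filter_upwards [mass_eq_one] with x hx
    simp [κ', Kernel.piecewise_apply, hx]
  refine (condDistrib_ae_eq_of_measure_eq_compProd X hY.aemeasurable ?_).trans hκ'.symm
  rw [h, Measure.compProd_congr hκ']

variable [SFinite μ] [IsSFiniteKernel κ] [SFinite ρ]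

lemma ae_integrable_prod_of_integrable_prod_compProd {f : γ × α × β → E}
    (hf : StronglyMeasurable f) (hint : Integrable f (ρ.prod (μ ⊗ₘ κ))) :
    ∀ᵐ x ∂μ, Integrable (fun z : γ × β ↦ f (z.1, x, z.2)) (ρ.prod (κ x)) := by
  have norm_integrable : Integrable (fun y ↦ ∫ a, ‖f (a, y)‖ ∂ρ) (μ ⊗ₘ κ) :=
    hint.integral_norm_prod_right
  filter_upwards [Measure.ae_ae_of_ae_compProd hint.prod_left_ae,
    norm_integrable.ae_of_compProd] with x hsection hnorm
  exact (integrable_prod_iff' (hf.comp_measurable (by fun_prop)).aestronglyMeasurable).2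
    ⟨hsection, hnorm⟩

lemma integral_compProd_integral_comm [NormedSpace ℝ E] {f : γ × α × β → E}
    (hf : StronglyMeasurable f) (hint : Integrable f (ρ.prod (μ ⊗ₘ κ))) :
    ∫ y, ∫ a, f (a, y) ∂ρ ∂(μ ⊗ₘ κ) = ∫ x, ∫ a, ∫ b, f (a, x, b) ∂κ x ∂ρ ∂μ := by
  rw [Measure.integral_compProd hint.integral_prod_right]
  refine integral_congr_ae ?_
  filter_upwards [ae_integrable_prod_of_integrable_prod_compProd hf hint] with x hx
  exact (integral_integral_swap hx).symm

end CompProd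

section DensityKernel

variable {𝓥 𝓔 : Type*} [MeasurableSpace 𝓥] [MeasurableSpace 𝓔]

/-- The kernel `v ↦ p(·, v) ν` from `𝓥` to `𝓔` with density `p` with respect to `ν`; negative values
of `p` are truncated to `0`. -/
noncomputable def densityKernel (ν : Measure 𝓔) [SFinite ν] (p : 𝓔 × 𝓥 → ℝ) : Kernel 𝓥 𝓔 :=
  (Kernel.const 𝓥 ν).withDensity fun v e ↦ ENNReal.ofReal (p (e, v))

variable {ν : Measure 𝓔} [SFinite ν] {p : 𝓔 × 𝓥 → ℝ}

instance : IsSFiniteKernel (densityKernel ν p) :=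
  Kernel.IsSFiniteKernel.withDensity _ fun _ _ ↦ ENNReal.ofReal_ne_top

lemma densityKernel_apply (hp : Measurable p) (v : 𝓥) :
    densityKernel ν p v = ν.withDensity fun e ↦ ENNReal.ofReal (p (e, v)) := by
  rw [densityKernel, Kernel.withDensity_apply _ (by fun_prop), Kernel.const_apply]

lemma densityKernel_prodMkRight {𝓐 : Type*} [MeasurableSpace 𝓐] (hp : Measurable p) :
    (densityKernel ν p).prodMkRight 𝓐
      = densityKernel ν fun x : 𝓔 × 𝓥 × 𝓐 ↦ p (x.1, x.2.1) := by
  ext1 x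
  rw [Kernel.prodMkRight_apply, densityKernel_apply hp, densityKernel_apply (by fun_prop)]

lemma integral_densityKernel {E : Type*} [NormedAddCommGroup E] [NormedSpace ℝ E]
    (hp : Measurable p) (hp_nonneg : ∀ x, 0 ≤ p x) (v : 𝓥) (f : 𝓔 → E) :
    ∫ e, f e ∂densityKernel ν p v = ∫ e, p (e, v) • f e ∂ν := by
  rw [densityKernel_apply hp, integral_withDensity_eq_integral_toReal_smul (by fun_prop) (by simp)]
  simp only [ENNReal.toReal_ofReal (hp_nonneg _)]

lemma densityKernel_apply_eq_ofReal_integral (hp : Measurable p) (hp_nonneg : ∀ x, 0 ≤ p x)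
    {v : 𝓥} (hint : Integrable (fun e ↦ p (e, v)) ν) {s : Set 𝓔} (hs : MeasurableSet s) :
    densityKernel ν p v s = ENNReal.ofReal (∫ e, s.indicator 1 e * p (e, v) ∂ν) := by
  rw [densityKernel_apply hp, withDensity_apply _ hs,
    ← ofReal_integral_eq_lintegral_ofReal hint.integrableOn (.of_forall fun e ↦ hp_nonneg _),
    ← integral_indicator hs]
  congr! 3 with e
  by_cases he : e ∈ s <;> simp [he]

end DensityKernel

/-- `p` is a conditional density of `ε` given `V` with respect to `ν`, under `P`. The identity is
only required of bounded test functions `ψ`, and its integrals are Bochner integrals: that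
`p(·, V)` is almost surely `ν`-integrable is a consequence and not part of the definition. -/
structure IsCondDensity {Ω 𝓥 𝓔 : Type*} [MeasurableSpace Ω] [MeasurableSpace 𝓥]
    [MeasurableSpace 𝓔] (p : 𝓔 × 𝓥 → ℝ) (ε : Ω → 𝓔) (V : Ω → 𝓥) (ν : Measure 𝓔)
    (P : Measure Ω) : Prop where
  measurable : Measurable p
  nonneg : ∀ x, 0 ≤ p x
  integral_eq : ∀ ψ : 𝓔 × 𝓥 → ℝ, Measurable ψ → (∃ C, ∀ x, |ψ x| ≤ C) →
    ∫ ω, ψ (ε ω, V ω) ∂P = ∫ ω, ∫ e, ψ (e, V ω) * p (e, V ω) ∂ν ∂P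

namespace IsCondDensity

variable {Ω 𝓐 𝓥 𝓔 E : Type*} {mΩ : MeasurableSpace Ω} {m𝓐 : MeasurableSpace 𝓐}
  {m𝓥 : MeasurableSpace 𝓥} {m𝓔 : MeasurableSpace 𝓔} [NormedAddCommGroup E] [NormedSpace ℝ E]
  {P : Measure Ω} {ν : Measure 𝓔} {A : Ω → 𝓐} {V : Ω → 𝓥} {ε : Ω → 𝓔} {p : 𝓔 × 𝓥 → ℝ}

lemma measureReal_preimage (h : IsCondDensity p ε V ν P) (hV : Measurable V) (hε : Measurable ε)
    {s : Set (𝓥 × 𝓔)} (hs : MeasurableSet s) :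
    P.real ((fun ω ↦ (V ω, ε ω)) ⁻¹' s)
      = ∫ ω, ∫ e, (Prod.mk (V ω) ⁻¹' s).indicator 1 e * p (e, V ω) ∂ν ∂P := by
  rw [← integral_indicator_one ((hV.prodMk hε) hs)]
  refine h.integral_eq ((Prod.swap ⁻¹' s).indicator 1)
    (measurable_one.indicator (measurable_swap hs)) ⟨1, fun x ↦ ?_⟩
  by_cases hx : x.swap ∈ s <;> simp [Set.indicator, hx]

lemma comp_measurableEquiv {𝓦 : Type*} [MeasurableSpace 𝓦] (h : IsCondDensity p ε V ν P)
    (φ : 𝓥 ≃ᵐ 𝓦) :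
    IsCondDensity (fun x : 𝓔 × 𝓦 ↦ p (x.1, φ.symm x.2)) ε (fun ω ↦ φ (V ω)) ν P := by
  have hp := h.measurable
  refine ⟨by fun_prop, fun x ↦ h.nonneg _, fun ψ hψ ⟨C, hC⟩ ↦ ?_⟩
  simpa using h.integral_eq (fun x ↦ ψ (x.1, φ x.2)) (by fun_prop) ⟨C, fun x ↦ hC _⟩

variable [IsFiniteMeasure P]

-- The total mass integrates to `P(Ω)`, which is nonzero unless `P = 0`; a non-integrable function
-- has Bochner integral `0`.
lemma integrable_integral (h : IsCondDensity p ε V ν P) (hV : Measurable V) (hε : Measurable ε) :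
    Integrable (fun ω ↦ ∫ e, p (e, V ω) ∂ν) P := by
  obtain rfl | hP := eq_or_ne P 0
  · exact integrable_zero_measure
  refine .of_integral_ne_zero ?_
  have total_mass : P.real Set.univ = ∫ ω, ∫ e, p (e, V ω) ∂ν ∂P := by
    simpa using h.measureReal_preimage hV hε .univ
  rw [← total_mass]
  simpa [measureReal_eq_zero_iff] using hP

variable [SFinite ν]

-- On `{V ∈ s}`, with `s` the set where integrability fails, the inner Bochner integral is `0`, so
-- testing on the indicator of `s` gives `P(V ∈ s) = 0`.
lemma ae_integrable (h : IsCondDensity p ε V ν P) (hV : Measurable V) (hε : Measurable ε) :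
    ∀ᵐ ω ∂P, Integrable (fun e ↦ p (e, V ω)) ν := by
  let s : Set 𝓥 := {v | ¬Integrable (fun e ↦ p (e, v)) ν}
  have hs : MeasurableSet s :=
    (measurableSet_integrable (f := fun v e ↦ p (e, v))
      (h.measurable.comp measurable_swap).stronglyMeasurable).compl
  have inner_eq_zero (ω : Ω) :
      ∫ e, (Prod.mk (V ω) ⁻¹' (s ×ˢ Set.univ)).indicator 1 e * p (e, V ω) ∂ν = 0 := by
    by_cases hω : V ω ∈ s
    · simpa [hω] using integral_undef hω
    · simp [hω]
  have preimage_null : P.real ((fun ω ↦ (V ω, ε ω)) ⁻¹' (s ×ˢ Set.univ)) = 0 := by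
    rw [h.measureReal_preimage hV hε (hs.prod .univ)]
    simp only [inner_eq_zero, integral_zero]
  rw [measureReal_eq_zero_iff] at preimage_null
  simpa [ae_iff, s, Set.preimage] using preimage_null

lemma integrable_integral_indicator (h : IsCondDensity p ε V ν P) (hV : Measurable V)
    (hε : Measurable ε) {s : Set (𝓥 × 𝓔)} (hs : MeasurableSet s) :
    Integrable (fun ω ↦ ∫ e, (Prod.mk (V ω) ⁻¹' s).indicator 1 e * p (e, V ω) ∂ν) P := by
  have hq : StronglyMeasurable fun v ↦ ∫ e, (Prod.mk v ⁻¹' s).indicator 1 e * p (e, v) ∂ν :=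
    ((measurable_one.indicator hs).mul
      (h.measurable.comp measurable_swap)).stronglyMeasurable.integral_prod_right'
  refine (h.integrable_integral hV hε).mono' (hq.comp_measurable hV).aestronglyMeasurable ?_
  filter_upwards [h.ae_integrable hV hε] with ω hω
  refine norm_integral_le_of_norm_le hω (.of_forall fun e ↦ ?_)
  by_cases he : (V ω, e) ∈ s <;> simp [he, h.nonneg, abs_of_nonneg]

lemma map_prodMk_eq_compProd (h : IsCondDensity p ε V ν P) (hV : Measurable V)
    (hε : Measurable ε) :
    P.map (fun ω ↦ (V ω, ε ω)) = P.map V ⊗ₘ densityKernel ν p := by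
  ext s hs
  let q : Ω → ℝ := fun ω ↦ ∫ e, (Prod.mk (V ω) ⁻¹' s).indicator 1 e * p (e, V ω) ∂ν
  have hsection (v : 𝓥) : MeasurableSet (Prod.mk v ⁻¹' s) := measurable_prodMk_left hs
  have kernel_eq : ∀ᵐ ω ∂P,
      densityKernel ν p (V ω) (Prod.mk (V ω) ⁻¹' s) = ENNReal.ofReal (q ω) := by
    filter_upwards [h.ae_integrable hV hε] with ω hω
    exact densityKernel_apply_eq_ofReal_integral h.measurable h.nonneg hω (hsection _)
  have q_nonneg (ω : Ω) : 0 ≤ q ω := integral_nonneg fun e ↦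
    mul_nonneg (Set.indicator_nonneg (fun _ _ ↦ zero_le_one) e) (h.nonneg _)
  calc P.map (fun ω ↦ (V ω, ε ω)) s
      = ENNReal.ofReal (P.real ((fun ω ↦ (V ω, ε ω)) ⁻¹' s)) := by
        rw [Measure.map_apply (hV.prodMk hε) hs, ofReal_measureReal]
    _ = ENNReal.ofReal (∫ ω, q ω ∂P) := by rw [h.measureReal_preimage hV hε hs]
    _ = ∫⁻ ω, ENNReal.ofReal (q ω) ∂P :=
        ofReal_integral_eq_lintegral_ofReal (h.integrable_integral_indicator hV hε hs)
          (.of_forall q_nonneg)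
    _ = ∫⁻ ω, densityKernel ν p (V ω) (Prod.mk (V ω) ⁻¹' s) ∂P :=
        (lintegral_congr_ae kernel_eq).symm
    _ = (P.map V ⊗ₘ densityKernel ν p) s := by
        rw [Measure.compProd_apply hs,
          lintegral_map (Kernel.measurable_kernel_prodMk_left hs) hV]

lemma of_map_prodMk_eq_compProd (hV : Measurable V) (hε : Measurable ε) (hp : Measurable p)
    (hp_nonneg : ∀ x, 0 ≤ p x)
    (h : P.map (fun ω ↦ (V ω, ε ω)) = P.map V ⊗ₘ densityKernel ν p) :
    IsCondDensity p ε V ν P := by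
  refine ⟨hp, hp_nonneg, fun ψ hψ ⟨C, hC⟩ ↦ ?_⟩
  have hψ_swap : StronglyMeasurable fun x : 𝓥 × 𝓔 ↦ ψ x.swap :=
    (hψ.comp measurable_swap).stronglyMeasurable
  have hint : Integrable (fun x : 𝓥 × 𝓔 ↦ ψ x.swap) (P.map V ⊗ₘ densityKernel ν p) := by
    rw [← h]
    exact .of_bound hψ_swap.aestronglyMeasurable C (.of_forall fun x ↦ hC _)
  calc ∫ ω, ψ (ε ω, V ω) ∂P
      = ∫ x, ψ x.swap ∂P.map (fun ω ↦ (V ω, ε ω)) :=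
        (integral_map (hV.prodMk hε).aemeasurable hψ_swap.aestronglyMeasurable).symm
    _ = ∫ v, ∫ e, ψ (e, v) ∂densityKernel ν p v ∂P.map V := by
        rw [h, Measure.integral_compProd hint]; rfl
    _ = ∫ ω, ∫ e, ψ (e, V ω) ∂densityKernel ν p (V ω) ∂P :=
        integral_map hV.aemeasurable hψ_swap.integral_kernel_prod_right'.aestronglyMeasurable
    _ = ∫ ω, ∫ e, ψ (e, V ω) * p (e, V ω) ∂ν ∂P := by
        simp only [integral_densityKernel hp hp_nonneg, smul_eq_mul, mul_comm]

lemma condDistrib_ae_eq [StandardBorelSpace 𝓔] [Nonempty 𝓔] (h : IsCondDensity p ε V ν P)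
    (hV : Measurable V) (hε : Measurable ε) :
    condDistrib ε V P =ᵐ[P.map V] densityKernel ν p :=
  condDistrib_ae_eq_of_map_eq_compProd_of_isSFiniteKernel hε (h.map_prodMk_eq_compProd hV hε)

lemma prodMk_of_condIndepFun [StandardBorelSpace Ω] [StandardBorelSpace 𝓐] [Nonempty 𝓐]
    [StandardBorelSpace 𝓔] [Nonempty 𝓔] (h : IsCondDensity p ε V ν P) (hA : Measurable A)
    (hV : Measurable V) (hε : Measurable ε)
    (hindep : CondIndepFun (m𝓥.comap V) hV.comap_le A ε P) :
    IsCondDensity (fun x : 𝓔 × 𝓥 × 𝓐 ↦ p (x.1, x.2.1)) ε (fun ω ↦ (V ω, A ω)) ν P := by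
  have hVA : Measurable fun ω ↦ (V ω, A ω) := hV.prodMk hA
  have hp := h.measurable
  have kernel_eq_given_fst : ∀ᵐ x ∂P.map fun ω ↦ (V ω, A ω),
      condDistrib ε V P x.1 = densityKernel ν p x.1 := by
    have hkernel := h.condDistrib_ae_eq hV hε
    rw [← Measure.fst_map_prodMk hA, Measure.fst] at hkernel
    exact ae_of_ae_map measurable_fst.aemeasurable hkernel
  have kernel_eq : condDistrib ε (fun ω ↦ (V ω, A ω)) P
      =ᵐ[P.map fun ω ↦ (V ω, A ω)] (densityKernel ν p).prodMkRight 𝓐 := by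
    filter_upwards [(condIndepFun_iff_condDistrib_prod_ae_eq_prodMkRight hε hA hV).1 hindep,
      kernel_eq_given_fst] with x hindep_x hkernel
    rw [hindep_x, Kernel.prodMkRight_apply, Kernel.prodMkRight_apply, hkernel]
  refine of_map_prodMk_eq_compProd hVA hε (by fun_prop) (fun x ↦ h.nonneg _) ?_
  rw [← compProd_map_condDistrib hε.aemeasurable, Measure.compProd_congr kernel_eq,
    densityKernel_prodMkRight hp]

lemma condExp_ae_eq [CompleteSpace E] [StandardBorelSpace 𝓔] [Nonempty 𝓔]
    (h : IsCondDensity p ε V ν P) (hV : Measurable V) (hε : Measurable ε) {f : 𝓥 × 𝓔 → E}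
    (hf : StronglyMeasurable f) (hint : Integrable (fun ω ↦ f (V ω, ε ω)) P) :
    P[fun ω ↦ f (V ω, ε ω) | m𝓥.comap V]
      =ᵐ[P] fun ω ↦ ∫ e, p (e, V ω) • f (V ω, e) ∂ν := by
  filter_upwards [condExp_prod_ae_eq_integral_condDistrib hV hε.aemeasurable hf hint,
    ae_of_ae_map hV.aemeasurable (h.condDistrib_ae_eq hV hε)] with ω hcondExp hkernel
  rw [hcondExp, hkernel, integral_densityKernel h.measurable h.nonneg]

lemma integral_integral_eq {μ : Measure 𝓐} [SFinite μ] (h : IsCondDensity p ε V ν P)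
    (hV : Measurable V) (hε : Measurable ε) {f : 𝓐 × 𝓥 × 𝓔 → E} (hf : StronglyMeasurable f)
    (hint : Integrable (fun x : 𝓐 × Ω ↦ f (x.1, V x.2, ε x.2)) (μ.prod P)) :
    ∫ ω, ∫ a, f (a, V ω, ε ω) ∂μ ∂P
      = ∫ ω, ∫ a, ∫ e, p (e, V ω) • f (a, V ω, e) ∂ν ∂μ ∂P := by
  have hVε : Measurable fun ω ↦ (V ω, ε ω) := hV.prodMk hε
  have hint_law : Integrable f (μ.prod (P.map V ⊗ₘ densityKernel ν p)) := by
    rw [← h.map_prodMk_eq_compProd hV hε]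
    exact (((MeasurePreserving.id μ).prod (hVε.measurePreserving P)).integrable_comp
      hf.aestronglyMeasurable).1 hint
  have hf_inner : StronglyMeasurable fun x : 𝓐 × 𝓥 ↦
      ∫ e, f (x.1, x.2, e) ∂densityKernel ν p x.2 :=
    (hf.comp_measurable MeasurableEquiv.prodAssoc.measurable).integral_kernel_prod_right'
      (κ := (densityKernel ν p).prodMkLeft 𝓐)
  calc ∫ ω, ∫ a, f (a, V ω, ε ω) ∂μ ∂P
      = ∫ y, ∫ a, f (a, y) ∂μ ∂P.map (fun ω ↦ (V ω, ε ω)) :=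
        (integral_map hVε.aemeasurable hf.integral_prod_left'.aestronglyMeasurable).symm
    _ = ∫ v, ∫ a, ∫ e, f (a, v, e) ∂densityKernel ν p v ∂μ ∂P.map V := by
        rw [h.map_prodMk_eq_compProd hV hε, integral_compProd_integral_comm hf hint_law]
    _ = ∫ ω, ∫ a, ∫ e, f (a, V ω, e) ∂densityKernel ν p (V ω) ∂μ ∂P :=
        integral_map hV.aemeasurable hf_inner.integral_prod_left'.aestronglyMeasurable
    _ = ∫ ω, ∫ a, ∫ e, p (e, V ω) • f (a, V ω, e) ∂ν ∂μ ∂P := by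
        simp only [integral_densityKernel h.measurable h.nonneg]

end IsCondDensity

theorem icc_lemma5_reg_observed_confounders_general
    {Ω 𝓐 𝓥 𝓔 E : Type*} [MeasurableSpace Ω] [StandardBorelSpace Ω] [Nonempty Ω]
    [MeasurableSpace 𝓐] [StandardBorelSpace 𝓐] [MeasurableSpace 𝓥]
    [MeasurableSpace 𝓔] [StandardBorelSpace 𝓔]
    [NormedAddCommGroup E] [NormedSpace ℝ E] [CompleteSpace E]
    {P : Measure Ω} [IsFiniteMeasure P] {μA : Measure 𝓐} [SFinite μA]
    {ν : Measure 𝓔} [SFinite ν] {A : Ω → 𝓐} {V : Ω → 𝓥} {ε : Ω → 𝓔}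
    (hA : Measurable A) (hV : Measurable V) (hε : Measurable ε)
    {g : 𝓐 × 𝓥 × 𝓔 → E} {π : 𝓐 → ℝ} (hg : StronglyMeasurable g) (hπ : Measurable π)
    (hindep : CondIndepFun (MeasurableSpace.comap V inferInstance) hV.comap_le A ε P)
    {p : 𝓔 × 𝓥 → ℝ} (hp : IsCondDensity p ε V ν P)
    {k : 𝓐 × 𝓥 → E} (hk : ∀ a v, k (a, v) = ∫ e, p (e, v) • g (a, v, e) ∂ν)
    (hY_int : Integrable (fun ω ↦ g (A ω, V ω, ε ω)) P)
    (hJ_int : Integrable (fun x : 𝓐 × Ω ↦ π x.1 • g (x.1, V x.2, ε x.2)) (μA.prod P)) :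
    (P[fun ω ↦ g (A ω, V ω, ε ω) | MeasurableSpace.comap (fun ω ↦ (A ω, V ω)) inferInstance]
      =ᵐ[P] fun ω ↦ k (A ω, V ω))
    ∧ ∫ ω, ∫ a, π a • k (a, V ω) ∂μA ∂P = ∫ ω, ∫ a, π a • g (a, V ω, ε ω) ∂μA ∂P := by
  have : Nonempty 𝓐 := ‹Nonempty Ω›.map A
  have : Nonempty 𝓔 := ‹Nonempty Ω›.map ε
  constructor
  · have density_given_treatment :
        IsCondDensity (fun x : 𝓔 × 𝓐 × 𝓥 ↦ p (x.1, x.2.2)) ε (fun ω ↦ (A ω, V ω)) ν P :=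
      (hp.prodMk_of_condIndepFun hA hV hε hindep).comp_measurableEquiv .prodComm
    simpa only [hk] using density_given_treatment.condExp_ae_eq (hA.prodMk hV) hε
      (f := fun x ↦ g (x.1.1, x.1.2, x.2)) (hg.comp_measurable (by fun_prop)) hY_int
  · have hf : StronglyMeasurable fun x : 𝓐 × 𝓥 × 𝓔 ↦ π x.1 • g x :=
      (hπ.comp measurable_fst).stronglyMeasurable.smul hg
    rw [hp.integral_integral_eq hV hε hf hJ_int]
    simp only [hk, smul_comm (p _), integral_smul]

/-- **Lemma 5, regression part (ICC paper).** With observed confounders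
`(η, U)`, if `A ⫫ ε | (η, U)` and `p` is a conditional density of `ε` given
`(η, U)` w.r.t. `ν`, then with `k(a, v, u) := ∫ g(a, u, e) p(e, v, u) dν(e)`:
(a) `E[Y | A, η, U] = k(A, η, U)` a.s.; and
(b) `E[∫ k(a, η, U) π(a) dμ_A(a)] = J := E[∫ g(a, U, ε) π(a) dμ_A(a)]`. -/
theorem icc_lemma5_reg_observed_confounders
    {Ω 𝓐 𝓤 𝓔 : Type*}
    [MeasurableSpace Ω] [StandardBorelSpace Ω] [Nonempty Ω]
    [MeasurableSpace 𝓐] [StandardBorelSpace 𝓐]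
    [MeasurableSpace 𝓤] [StandardBorelSpace 𝓤]
    [MeasurableSpace 𝓔] [StandardBorelSpace 𝓔]
    (P : Measure Ω) [IsProbabilityMeasure P]
    (μA : Measure 𝓐) [SigmaFinite μA] (ν : Measure 𝓔) [SigmaFinite ν]
    (A : Ω → 𝓐) (U : Ω → 𝓤) (ε : Ω → 𝓔) (η : Ω → ℝ)
    (hA : Measurable A) (hU : Measurable U) (hε : Measurable ε) (hη : Measurable η)
    (g : 𝓐 × 𝓤 × 𝓔 → ℝ) (π : 𝓐 → ℝ) (hg : Measurable g) (hπ : Measurable π)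
    -- A ⫫ ε | (η, U)
    (hindep : CondIndepFun
      (MeasurableSpace.comap (fun ω => (η ω, U ω)) inferInstance)
      (Measurable.comap_le (by fun_prop)) A ε P)
    (p : 𝓔 × ℝ × 𝓤 → ℝ) (hp : Measurable p) (hp_nonneg : ∀ x, 0 ≤ p x)
    -- p is a conditional density of ε given (η, U) w.r.t. ν
    (hp_density : ∀ ψ : 𝓔 × ℝ × 𝓤 → ℝ, Measurable ψ → (∃ C, ∀ x, |ψ x| ≤ C) →
      ∫ ω, ψ (ε ω, η ω, U ω) ∂P
        = ∫ ω, (∫ e, ψ (e, η ω, U ω) * p (e, η ω, U ω) ∂ν) ∂P)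
    -- k(a, v, u) := ∫ g(a, u, e) p(e, v, u) dν(e)
    (k : 𝓐 × ℝ × 𝓤 → ℝ) (hk : Measurable k)
    (hk_def : ∀ a v u, k (a, v, u) = ∫ e, g (a, u, e) * p (e, v, u) ∂ν)
    -- all displayed integrands are integrable
    (hYInt : Integrable (fun ω => g (A ω, U ω, ε ω)) P)
    (hk_int : ∀ a v u, Integrable (fun e => g (a, u, e) * p (e, v, u)) ν)
    (hkInt : Integrable (fun p : 𝓐 × Ω => k (p.1, η p.2, U p.2) * π p.1) (μA.prod P))
    (hJInt : Integrable (fun p : 𝓐 × Ω => g (p.1, U p.2, ε p.2) * π p.1) (μA.prod P)) :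
    -- (a) E[Y | A, η, U] = k(A, η, U) a.s.
    (P[(fun ω => g (A ω, U ω, ε ω)) |
        MeasurableSpace.comap (fun ω => (A ω, η ω, U ω)) inferInstance]
      =ᵐ[P] fun ω => k (A ω, η ω, U ω))
    -- (b) the regression identity
    ∧ ∫ ω, (∫ a, k (a, η ω, U ω) * π a ∂μA) ∂P
        = ∫ ω, (∫ a, g (a, U ω, ε ω) * π a ∂μA) ∂P := by
  simpa only [smul_eq_mul, mul_comm] using
    icc_lemma5_reg_observed_confounders_general hA (hη.prodMk hU) hε
      (g := fun x ↦ g (x.1, x.2.1.2, x.2.2)) (π := π) (k := k) (μA := μA)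
      (hg.comp (by fun_prop)).stronglyMeasurable hπ hindep ⟨hp, hp_nonneg, hp_density⟩
      (fun a v ↦ by simp only [hk_def, smul_eq_mul, mul_comm]) hYInt
      (by simpa only [smul_eq_mul, mul_comm] using hJInt)
end

section
/- Suppose: (i) Z and Y are conditionally independent given (A, Ṽ, U); (ii) ε and A are conditionally independent given (Ṽ, U); (iii) f : 𝓐 × ℝ × 𝓤 → ℝ is a nonnegative measurable conditional density of A given (Ṽ, U) with respect to μ_A, i.e. for every bounded measurable φ, E[φ(A, Ṽ, U)] = E[∫_𝓐 φ(a, Ṽ, U) f(a, Ṽ, U) dμ_A(a)], with f(A, Ṽ, U) > 0 almost surely and f(a, Ṽ(ω), U(ω)) > 0 for μ_A ⊗ ℙ-almost every (a, ω) with π(a) ≠ 0; (iv) q₀ : 𝓐 × ℝ × 𝓩 → ℝ is measurable and satisfies the structural action-bridge condition E[π(A) q₀(A, Ṽ, Z) | A, Ṽ, U] = π(A)/f(A, Ṽ, U) almost surely; (v) all displayed integrands are integrable. Then the IPW identity holds: E[Y · π(A) · q₀(A, Ṽ, Z)] = J := E[∫_𝓐 g(a, U, ε) π(a) dμ_A(a)].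 -/
open MeasureTheory ProbabilityTheory

/-!
The factor `q₀` enters only through its conditional mean: as `Z ⫫ Y | (A, Ṽ, U)`, averaging
`π(A) q₀(A, Ṽ, Z) Y` over `Z` turns the bridge into the weight `π(A) / f(A, Ṽ, U)`. As
`ε ⫫ A | (Ṽ, U)`, the function `f` is still a conditional density of `A` once `ε` is added to the
conditioning variables, so dividing by `f` replaces the conditional law of `A` by `μ_A`, with
`(U, ε)` left as they are.
-/

open scoped NNReal

section CondIndepFun

variable {Ω : Type*} {m mΩ : MeasurableSpace Ω} [StandardBorelSpace Ω] {hm : m ≤ mΩ}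
  {P : Measure Ω} [IsFiniteMeasure P]

theorem condIndepFun_prodMk_left_of_measurable {β γ δ : Type*} [MeasurableSpace β]
    [MeasurableSpace γ] [MeasurableSpace δ] {W : Ω → β} {X : Ω → γ} {Y : Ω → δ}
    (h : CondIndepFun m hm X Y P) (hW : Measurable[m] W) (hX : Measurable X) (hY : Measurable Y) :
    CondIndepFun m hm (fun ω => (W ω, X ω)) Y P := by
  have hWX : Measurable fun ω => (W ω, X ω) := (hW.mono hm le_rfl).prodMk hX
  rw [condIndepFun_iff_condIndep]
  refine CondIndepSets.condIndep hWX.comap_le hY.comap_le (isPiSystem_prod.comap _)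
    (@MeasurableSpace.isPiSystem_measurableSet _ (MeasurableSpace.comap Y inferInstance))
    (by rw [← generateFrom_prod, MeasurableSpace.comap_generateFrom]; rfl)
    (@MeasurableSpace.generateFrom_measurableSet _ (MeasurableSpace.comap Y inferInstance)).symm ?_
  rw [condIndepSets_iff]
  rotate_left
  · rintro _ ⟨_, ⟨s, hs, t, ht, rfl⟩, rfl⟩
    exact hWX (hs.prod ht)
  · exact fun u hu => hY.comap_le u hu
  rintro _ _ ⟨_, ⟨s, hs, t, ht, rfl⟩, rfl⟩ ⟨u, hu, rfl⟩
  have pull_out (E : Set Ω) (hE : MeasurableSet E) :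
      P⟦W ⁻¹' s ∩ E | m⟧ =ᵐ[P] (W ⁻¹' s).indicator (P⟦E | m⟧) := by
    rw [← Set.indicator_indicator]
    exact condExp_indicator ((integrable_const _).indicator hE) (hW hs)
  have hXY := (condIndepFun_iff_condExp_inter_preimage_eq_mul hX hY).1 h t u ht hu
  rw [Set.mk_preimage_prod, Set.inter_assoc]
  filter_upwards [hXY, pull_out _ ((hX ht).inter (hY hu)), pull_out _ (hX ht)] with ω hω hXYω hXω
  rw [Pi.mul_apply, hXYω, hXω, ← Set.indicator_mul_const]
  simp only [Set.indicator, hω]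

theorem ae_indepFun_condExpKernel {β γ : Type*} [MeasurableSpace β] [MeasurableSpace γ]
    [MeasurableSpace.CountableOrCountablyGenerated Ω (β × γ)] {X : Ω → β} {Y : Ω → γ}
    (h : CondIndepFun m hm X Y P) (hX : Measurable X) (hY : Measurable Y) :
    ∀ᵐ ω ∂P, IndepFun X Y (condExpKernel P m ω) := by
  filter_upwards [ae_of_ae_trim hm ((condIndepFun_iff_map_prod_eq_prod_map_map hX hY).1 h)]
    with ω hω
  rw [indepFun_iff_map_prod_eq_prod_map_map hX.aemeasurable hY.aemeasurable]
  rwa [Kernel.map_apply _ (hX.prodMk hY), Kernel.prod_apply, Kernel.map_apply _ hX,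
    Kernel.map_apply _ hY] at hω

variable {X Y : Ω → ℝ}

-- `P[Y | m]` is the junk value `0` when `Y` is not integrable; the kernel mean takes its place.
theorem condExp_mul_ae_eq_of_condIndepFun (h : CondIndepFun m hm X Y P)
    (hX : Measurable X) (hY : Measurable Y) (hX_int : Integrable X P)
    (hXY_int : Integrable (fun ω => X ω * Y ω) P) :
    P[fun ω => X ω * Y ω | m] =ᵐ[P] fun ω => P[X | m] ω * ∫ y, Y y ∂condExpKernel P m ω := by
  filter_upwards [ae_indepFun_condExpKernel h hX hY, condExp_ae_eq_integral_condExpKernel hm hX_int,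
    condExp_ae_eq_integral_condExpKernel hm hXY_int] with ω hindep hXω hXYω
  rw [hXYω, hXω, hindep.integral_fun_mul_eq_mul_integral hX.aestronglyMeasurable
    hY.aestronglyMeasurable]

theorem setIntegral_mul_eq_setIntegral_condExp_mul (h : CondIndepFun m hm X Y P)
    (hX : Measurable X) (hY : Measurable Y) (hX_int : Integrable X P)
    (hXY_int : Integrable (fun ω => X ω * Y ω) P)
    (hcondExp_int : Integrable (fun ω => P[X | m] ω * Y ω) P) {s : Set Ω}
    (hs : MeasurableSet[m] s) :
    ∫ ω in s, X ω * Y ω ∂P = ∫ ω in s, P[X | m] ω * Y ω ∂P := by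
  have hm_condExp : Measurable[m] P[X | m] := stronglyMeasurable_condExp.measurable
  have hcondExp := condExp_mul_ae_eq_of_condIndepFun
    (condIndepFun_of_measurable_left (hm' := hm) hm_condExp hY)
    (hm_condExp.mono hm le_rfl) hY integrable_condExp hcondExp_int
  rw [condExp_of_stronglyMeasurable hm stronglyMeasurable_condExp integrable_condExp] at hcondExp
  rw [← setIntegral_condExp hm hXY_int hs, ← setIntegral_condExp hm hcondExp_int hs]
  exact integral_congr_ae (ae_restrict_of_ae
    ((condExp_mul_ae_eq_of_condIndepFun h hX hY hX_int hXY_int).trans hcondExp.symm))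

theorem integral_comp_mul_eq_of_condExp_ae_eq {β γ : Type*} [MeasurableSpace β]
    [MeasurableSpace γ] {W : Ω → β} {Z : Ω → γ} {r : Ω → ℝ} (hW : Measurable W)
    (h : CondIndepFun (MeasurableSpace.comap W inferInstance) hW.comap_le Z Y P)
    (hZ : Measurable Z) (hY : Measurable Y) {q : β × γ → ℝ} (hq : Measurable q)
    (hr : P[fun ω => q (W ω, Z ω) | MeasurableSpace.comap W inferInstance] =ᵐ[P] r)
    (hq_int : Integrable (fun ω => q (W ω, Z ω)) P)
    (hqY_int : Integrable (fun ω => q (W ω, Z ω) * Y ω) P)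
    (hrY_int : Integrable (fun ω => r ω * Y ω) P) :
    ∫ ω, q (W ω, Z ω) * Y ω ∂P = ∫ ω, r ω * Y ω ∂P := by
  have hqY : CondIndepFun (MeasurableSpace.comap W inferInstance) hW.comap_le
      (fun ω => q (W ω, Z ω)) Y P :=
    (condIndepFun_prodMk_left_of_measurable h (comap_measurable W) hZ hY).comp hq measurable_id
  have hrY : (fun ω => P[fun ω => q (W ω, Z ω) | MeasurableSpace.comap W inferInstance] ω * Y ω)
      =ᵐ[P] fun ω => r ω * Y ω := hr.mul .rfl
  have hset := setIntegral_mul_eq_setIntegral_condExp_mul hqY (hq.comp (hW.prodMk hZ)) hY hq_int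
    hqY_int (hrY_int.congr hrY.symm) .univ
  rw [setIntegral_univ, setIntegral_univ] at hset
  exact hset.trans (integral_congr_ae hrY)

end CondIndepFun

section WithDensity

variable {Ω α : Type*} [MeasurableSpace Ω] [MeasurableSpace α] {ν : Measure Ω}

theorem integrable_mul_indicator_one {F : Ω → ℝ} (hF : Integrable F ν) {T : Ω → α}
    (hT : Measurable T) {s : Set α} (hs : MeasurableSet s) :
    Integrable (fun z => F z * s.indicator (1 : α → ℝ) (T z)) ν := by
  refine hF.mul_bdd (c := 1) ((measurable_one.indicator hs).comp hT).aestronglyMeasurable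
    (ae_of_all _ fun z => ?_)
  by_cases hz : T z ∈ s <;> simp [hz]

theorem measureReal_map_withDensity_eq_integral {T : Ω → α} (hT : Measurable T) {w : Ω → ℝ≥0}
    (hw : Measurable w) {s : Set α} (hs : MeasurableSet s) :
    ((ν.withDensity fun z => w z).map T).real s =
      ∫ z, (w z : ℝ) * s.indicator (1 : α → ℝ) (T z) ∂ν := by
  rw [← integral_indicator_one hs, integral_map hT.aemeasurable
    (measurable_one.indicator hs).aestronglyMeasurable, integral_withDensity_eq_integral_smul hw]
  rfl

theorem smul_div_ae_eq_of_ae_pos {w : Ω → ℝ≥0} {φ : Ω → ℝ}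
    (hpos : ∀ᵐ z ∂ν, φ z ≠ 0 → 0 < w z) : (fun z => w z • (φ z / w z)) =ᵐ[ν] φ := by
  filter_upwards [hpos] with z hz
  rw [NNReal.smul_def, smul_eq_mul]
  exact mul_div_cancel_of_imp' fun hwz => by_contra fun hφz =>
    (hz hφz).ne' (NNReal.coe_eq_zero.1 hwz)

end WithDensity

/-- `f` is a conditional density of `X` given `V` with respect to `μ`: `E[φ(X, V)]` equals
`E[∫ φ(x, V) f(x, V) dμ(x)]` for every test function `φ`. The second functional is encoded as the
push-forward to `α × β` of the measure with density `f(x, V(ω))` on `α × Ω`. -/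
def HasCondDensity {Ω α β : Type*} [MeasurableSpace Ω] [MeasurableSpace α] [MeasurableSpace β]
    (X : Ω → α) (V : Ω → β) (f : α × β → ℝ≥0) (μ : Measure α) (P : Measure Ω) : Prop :=
  P.map (fun ω => (X ω, V ω)) =
    ((μ.prod P).withDensity fun z => f (z.1, V z.2)).map fun z => (z.1, V z.2)

section HasCondDensity

variable {Ω α β : Type*} [MeasurableSpace Ω] [MeasurableSpace α] [MeasurableSpace β]
  {P : Measure Ω} {μ : Measure α} {X : Ω → α} {V : Ω → β} {f : α × β → ℝ≥0}

section TestFunctions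

variable [IsFiniteMeasure P] [SFinite μ]

-- A non-integrable function has Bochner integral `0`. Testing with the indicator of those `y` for
-- which `f(·, y)` is not integrable shows that `V` almost surely avoids them; testing with `1`
-- gives the fibre masses the mean `P(Ω) ≠ 0`.
theorem integrable_density_of_forall_integral_eq (hV : Measurable V) (hf : Measurable f)
    (h : ∀ φ : α × β → ℝ, Measurable φ → (∃ C, ∀ z, |φ z| ≤ C) →
      ∫ ω, φ (X ω, V ω) ∂P = ∫ ω, ∫ x, φ (x, V ω) * f (x, V ω) ∂μ ∂P) :
    Integrable (fun z : α × Ω => (f (z.1, V z.2) : ℝ)) (μ.prod P) := by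
  have hf_real : Measurable fun z => (f z : ℝ) := hf.coe_nnreal_real
  have hfV : Measurable fun z : α × Ω => (f (z.1, V z.2) : ℝ) := by fun_prop
  refine (integrable_prod_iff' hfV.aestronglyMeasurable).2 ⟨?_, ?_⟩
  · let C : Set β := {y | Integrable (fun x => (f (x, y) : ℝ)) μ}ᶜ
    have hC : MeasurableSet C :=
      (_root_.measurableSet_integrable (μ := μ) (f := fun y x => (f (x, y) : ℝ))
        (hf_real.comp measurable_swap).stronglyMeasurable).compl
    have hfibre (ω : Ω) : ∫ x, C.indicator 1 (V ω) * (f (x, V ω) : ℝ) ∂μ = 0 := by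
      by_cases hω : V ω ∈ C
      · simp only [Set.indicator_of_mem hω, Pi.one_apply, one_mul]
        exact integral_undef hω
      · simp [Set.indicator_of_notMem hω]
    have hnull : P.real (V ⁻¹' C) = 0 := by
      have htest := h (fun z => C.indicator 1 z.2)
        ((measurable_one.indicator hC).comp measurable_snd)
        ⟨1, fun z => by by_cases hz : z.2 ∈ C <;> simp [hz]⟩
      simp only [hfibre, integral_zero] at htest
      rw [← integral_indicator_one (hV hC), ← htest]
      rfl
    filter_upwards [measure_eq_zero_iff_ae_notMem.1 ((measureReal_eq_zero_iff).1 hnull)] with ω hω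
    exact not_not.1 hω
  · rcases eq_zero_or_neZero P with rfl | hP
    · exact integrable_zero_measure
    have hmass := h 1 measurable_one ⟨1, by simp⟩
    simp only [Pi.one_apply, one_mul, integral_const, smul_eq_mul, mul_one] at hmass
    simp only [Real.norm_of_nonneg, NNReal.zero_le_coe]
    refine .of_integral_ne_zero ?_
    rw [← hmass]
    exact measureReal_univ_ne_zero

theorem hasCondDensity_of_forall_integral_eq (hX : Measurable X) (hV : Measurable V)
    (hf : Measurable f)
    (h : ∀ φ : α × β → ℝ, Measurable φ → (∃ C, ∀ z, |φ z| ≤ C) →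
      ∫ ω, φ (X ω, V ω) ∂P = ∫ ω, ∫ x, φ (x, V ω) * f (x, V ω) ∂μ ∂P) :
    HasCondDensity X V f μ P := by
  have hint := integrable_density_of_forall_integral_eq hV hf h
  have : IsFiniteMeasure ((μ.prod P).withDensity fun z => f (z.1, V z.2)) := by
    simpa using isFiniteMeasure_withDensity_ofReal hint.2
  refine Measure.ext fun s hs => (measureReal_eq_measureReal_iff).1 ?_
  have hindicator : Measurable (s.indicator (1 : α × β → ℝ)) := measurable_one.indicator hs
  rw [measureReal_map_withDensity_eq_integral (by fun_prop) (by fun_prop) hs,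
    ← integral_indicator_one hs, integral_map (by fun_prop) hindicator.aestronglyMeasurable,
    h _ hindicator ⟨1, fun z => by by_cases hz : z ∈ s <;> simp [hz]⟩, integral_prod_symm]
  · simp only [mul_comm]
  · exact integrable_mul_indicator_one hint (by fun_prop) hs

end TestFunctions

namespace HasCondDensity

theorem integrable_comp_iff {E : Type*} [NormedAddCommGroup E] [NormedSpace ℝ E]
    (h : HasCondDensity X V f μ P) (hX : Measurable X)
    (hV : Measurable V) (hf : Measurable f) {φ : α × β → E} (hφ : StronglyMeasurable φ) :
    Integrable (fun ω => φ (X ω, V ω)) P ↔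
      Integrable (fun z : α × Ω => f (z.1, V z.2) • φ (z.1, V z.2)) (μ.prod P) := by
  rw [← integrable_withDensity_iff_integrable_smul (by fun_prop)]
  have hlaw := integrable_map_measure (μ := P) (f := fun ω => (X ω, V ω))
    hφ.aestronglyMeasurable (by fun_prop)
  rw [h, integrable_map_measure hφ.aestronglyMeasurable (by fun_prop)] at hlaw
  exact hlaw.symm

theorem integral_comp {E : Type*} [NormedAddCommGroup E] [NormedSpace ℝ E]
    (h : HasCondDensity X V f μ P) (hX : Measurable X)
    (hV : Measurable V) (hf : Measurable f) {φ : α × β → E} (hφ : StronglyMeasurable φ) :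
    ∫ ω, φ (X ω, V ω) ∂P = ∫ z, f (z.1, V z.2) • φ (z.1, V z.2) ∂μ.prod P := by
  rw [← integral_map (φ := fun ω => (X ω, V ω)) (by fun_prop) hφ.aestronglyMeasurable, h,
    integral_map (by fun_prop) hφ.aestronglyMeasurable,
    integral_withDensity_eq_integral_smul (by fun_prop)]

theorem integrable_density [IsFiniteMeasure P] (h : HasCondDensity X V f μ P)
    (hX : Measurable X) (hV : Measurable V) (hf : Measurable f) :
    Integrable (fun z : α × Ω => (f (z.1, V z.2) : ℝ)) (μ.prod P) := by
  simpa [NNReal.smul_def] using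
    (h.integrable_comp_iff hX hV hf (stronglyMeasurable_const (b := (1 : ℝ)))).1
      (integrable_const 1)

section InverseWeighting

variable {φ : α × β → ℝ}

theorem integrable_div_density_iff (h : HasCondDensity X V f μ P) (hX : Measurable X)
    (hV : Measurable V) (hf : Measurable f) (hφ : Measurable φ)
    (hpos : ∀ᵐ z ∂μ.prod P, φ (z.1, V z.2) ≠ 0 → 0 < f (z.1, V z.2)) :
    Integrable (fun ω => φ (X ω, V ω) / f (X ω, V ω)) P ↔
      Integrable (fun z : α × Ω => φ (z.1, V z.2)) (μ.prod P) :=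
  (h.integrable_comp_iff hX hV hf (hφ.div hf.coe_nnreal_real).stronglyMeasurable).trans
    (integrable_congr (smul_div_ae_eq_of_ae_pos hpos))

theorem integral_div_density (h : HasCondDensity X V f μ P) (hX : Measurable X)
    (hV : Measurable V) (hf : Measurable f) (hφ : Measurable φ)
    (hpos : ∀ᵐ z ∂μ.prod P, φ (z.1, V z.2) ≠ 0 → 0 < f (z.1, V z.2)) :
    ∫ ω, φ (X ω, V ω) / f (X ω, V ω) ∂P = ∫ z, φ (z.1, V z.2) ∂μ.prod P :=
  (h.integral_comp hX hV hf (hφ.div hf.coe_nnreal_real).stronglyMeasurable).trans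
    (integral_congr_ae (smul_div_ae_eq_of_ae_pos hpos))

end InverseWeighting

variable [IsFiniteMeasure P] [SFinite μ]

theorem condExp_ae_eq_integral {E : Type*} [NormedAddCommGroup E] [NormedSpace ℝ E]
    [CompleteSpace E] (h : HasCondDensity X V f μ P) (hX : Measurable X)
    (hV : Measurable V) (hf : Measurable f) {φ : α × β → E} (hφ : StronglyMeasurable φ)
    (hφ_int : Integrable (fun ω => φ (X ω, V ω)) P) :
    P[fun ω => φ (X ω, V ω) | MeasurableSpace.comap V inferInstance] =ᵐ[P]
      fun ω => ∫ x, f (x, V ω) • φ (x, V ω) ∂μ := by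
  have hint := (h.integrable_comp_iff hX hV hf hφ).1 hφ_int
  have hmeas : StronglyMeasurable fun y => ∫ x, f (x, y) • φ (x, y) ∂μ :=
    (hf.stronglyMeasurable.smul hφ).integral_prod_left'
  refine (ae_eq_condExp_of_forall_setIntegral_eq hV.comap_le hφ_int
    (fun _ _ _ => hint.integral_prod_right.integrableOn) ?_
    (hmeas.comp_measurable (comap_measurable V)).aestronglyMeasurable).symm
  rintro _ ⟨C, hC, rfl⟩ -
  have hφC : StronglyMeasurable ((Prod.snd ⁻¹' C).indicator φ) := hφ.indicator (measurable_snd hC)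
  have hφC_int : Integrable (fun ω => (Prod.snd ⁻¹' C).indicator φ (X ω, V ω)) P :=
    hφ_int.indicator (hV hC)
  calc ∫ ω in V ⁻¹' C, ∫ x, f (x, V ω) • φ (x, V ω) ∂μ ∂P
      = ∫ ω, ∫ x, f (x, V ω) • (Prod.snd ⁻¹' C).indicator φ (x, V ω) ∂μ ∂P := by
        rw [← integral_indicator (hV hC)]
        refine integral_congr_ae (ae_of_all _ fun ω => ?_)
        by_cases hω : V ω ∈ C <;> simp [Set.indicator, hω]
    _ = ∫ z, f (z.1, V z.2) • (Prod.snd ⁻¹' C).indicator φ (z.1, V z.2) ∂μ.prod P :=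
        (integral_prod_symm _ ((h.integrable_comp_iff hX hV hf hφC).1 hφC_int)).symm
    _ = ∫ ω, (Prod.snd ⁻¹' C).indicator φ (X ω, V ω) ∂P := (h.integral_comp hX hV hf hφC).symm
    _ = ∫ ω in V ⁻¹' C, φ (X ω, V ω) ∂P := integral_indicator (hV hC)

section CondIndepFun

variable [StandardBorelSpace Ω] {γ : Type*} [MeasurableSpace γ] {Y : Ω → γ}

theorem setIntegral_mul_eq_setIntegral_integral_mul (h : HasCondDensity X V f μ P)
    (hX : Measurable X) (hV : Measurable V) (hY : Measurable Y) (hf : Measurable f)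
    (hXY : CondIndepFun (MeasurableSpace.comap V inferInstance) hV.comap_le X Y P)
    {φ : α → ℝ} {ψ : γ → ℝ} (hφ : Measurable φ) (hψ : Measurable ψ)
    (hφ_int : Integrable (fun ω => φ (X ω)) P)
    (hφψ_int : Integrable (fun ω => φ (X ω) * ψ (Y ω)) P)
    (hmean_int : Integrable (fun ω => (∫ x, f (x, V ω) • φ x ∂μ) * ψ (Y ω)) P)
    {C : Set β} (hC : MeasurableSet C) :
    ∫ ω in V ⁻¹' C, φ (X ω) * ψ (Y ω) ∂P =
      ∫ ω in V ⁻¹' C, (∫ x, f (x, V ω) • φ x ∂μ) * ψ (Y ω) ∂P := by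
  have hcondExp : (fun ω => P[fun ω => φ (X ω) | MeasurableSpace.comap V inferInstance] ω *
      ψ (Y ω)) =ᵐ[P] fun ω => (∫ x, f (x, V ω) • φ x ∂μ) * ψ (Y ω) :=
    (h.condExp_ae_eq_integral hX hV hf (φ := fun z => φ z.1)
      (hφ.comp measurable_fst).stronglyMeasurable hφ_int).mul .rfl
  exact (setIntegral_mul_eq_setIntegral_condExp_mul (hXY.comp hφ hψ) (hφ.comp hX) (hψ.comp hY)
    hφ_int hφψ_int (hmean_int.congr hcondExp.symm) ⟨C, hC, rfl⟩).trans
      (integral_congr_ae (ae_restrict_of_ae hcondExp))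

theorem measureReal_preimage_prod_eq_integral (h : HasCondDensity X V f μ P) (hX : Measurable X)
    (hV : Measurable V) (hY : Measurable Y) (hf : Measurable f)
    (hXY : CondIndepFun (MeasurableSpace.comap V inferInstance) hV.comap_le X Y P)
    {B : Set α} {C : Set β} {D : Set γ} (hB : MeasurableSet B) (hC : MeasurableSet C)
    (hD : MeasurableSet D) :
    P.real ((fun ω => (X ω, V ω, Y ω)) ⁻¹' (B ×ˢ C ×ˢ D)) =
      ∫ z, (f (z.1, V z.2) : ℝ) *
        (B ×ˢ C ×ˢ D).indicator (1 : α × β × γ → ℝ) (z.1, V z.2, Y z.2) ∂μ.prod P := by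
  let oneB : α → ℝ := B.indicator 1
  let oneD : γ → ℝ := D.indicator 1
  have h_oneB : Measurable oneB := measurable_one.indicator hB
  have h_oneD : Measurable oneD := measurable_one.indicator hD
  have hBCD : MeasurableSet (B ×ˢ C ×ˢ D) := hB.prod (hC.prod hD)
  have hXVY : Measurable fun ω => (X ω, V ω, Y ω) := by fun_prop
  have hrect (x : α) (ω : Ω) : (B ×ˢ C ×ˢ D).indicator (1 : α × β × γ → ℝ) (x, V ω, Y ω) =
      (V ⁻¹' C).indicator (fun ω => oneB x * oneD (Y ω)) ω := by
    by_cases hω : V ω ∈ C <;> simp [Set.indicator_prod_one, oneB, oneD, hω]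
  have hXB_int : Integrable (fun ω => oneB (X ω)) P := (integrable_const (1 : ℝ)).indicator (hX hB)
  have hmean_int : Integrable (fun ω => ∫ x, f (x, V ω) • oneB x ∂μ) P :=
    ((h.integrable_comp_iff hX hV hf (φ := fun z => oneB z.1)
      (h_oneB.comp measurable_fst).stronglyMeasurable).1 hXB_int).integral_prod_right
  calc P.real ((fun ω => (X ω, V ω, Y ω)) ⁻¹' (B ×ˢ C ×ˢ D))
      = ∫ ω, (B ×ˢ C ×ˢ D).indicator (1 : α × β × γ → ℝ) (X ω, V ω, Y ω) ∂P :=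
        (integral_indicator_one (hXVY hBCD)).symm
    _ = ∫ ω in V ⁻¹' C, oneB (X ω) * oneD (Y ω) ∂P := by
        simp only [hrect]
        exact integral_indicator (hV hC)
    _ = ∫ ω in V ⁻¹' C, (∫ x, f (x, V ω) • oneB x ∂μ) * oneD (Y ω) ∂P :=
        h.setIntegral_mul_eq_setIntegral_integral_mul hX hV hY hf hXY h_oneB h_oneD hXB_int
          (integrable_mul_indicator_one hXB_int hY hD)
          (integrable_mul_indicator_one hmean_int hY hD) hC
    _ = ∫ ω, ∫ x, (f (x, V ω) : ℝ) * (B ×ˢ C ×ˢ D).indicator 1 (x, V ω, Y ω) ∂μ ∂P := by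
        rw [← integral_indicator (hV hC)]
        congr with ω
        by_cases hω : V ω ∈ C
        · simp [hrect, hω, NNReal.smul_def, ← integral_mul_const, mul_assoc]
        · simp [hω]
    _ = _ := (integral_prod_symm _ (integrable_mul_indicator_one (h.integrable_density hX hV hf)
        (T := fun z => (z.1, V z.2, Y z.2)) (by fun_prop) hBCD)).symm

theorem prodMk_of_condIndepFun (h : HasCondDensity X V f μ P) (hX : Measurable X)
    (hV : Measurable V) (hY : Measurable Y) (hf : Measurable f)
    (hXY : CondIndepFun (MeasurableSpace.comap V inferInstance) hV.comap_le X Y P) :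
    HasCondDensity X (fun ω => (V ω, Y ω)) (fun z => f (z.1, z.2.1)) μ P := by
  have : IsFiniteMeasure ((μ.prod P).withDensity fun z => f (z.1, V z.2)) := by
    simpa using isFiniteMeasure_withDensity_ofReal (h.integrable_density hX hV hf).2
  refine Measure.ext_prod₃ fun {B C D} hB hC hD => (measureReal_eq_measureReal_iff).1 ?_
  rw [measureReal_map_withDensity_eq_integral (by fun_prop) (by fun_prop) (hB.prod (hC.prod hD)),
    map_measureReal_apply (by fun_prop) (hB.prod (hC.prod hD))]
  exact h.measureReal_preimage_prod_eq_integral hX hV hY hf hXY hB hC hD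

end CondIndepFun

end HasCondDensity

end HasCondDensity

theorem icc_lemma9_ipw_bridge_general {Ω 𝓐 𝓥 𝓤 𝓩 𝓔 : Type*}
    [MeasurableSpace Ω] [StandardBorelSpace Ω] [MeasurableSpace 𝓐] [MeasurableSpace 𝓥]
    [MeasurableSpace 𝓤] [MeasurableSpace 𝓩] [MeasurableSpace 𝓔]
    {P : Measure Ω} [IsFiniteMeasure P] {μA : Measure 𝓐} [SFinite μA]
    {A : Ω → 𝓐} {V : Ω → 𝓥} {U : Ω → 𝓤} {Z : Ω → 𝓩} {ε : Ω → 𝓔}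
    (hA : Measurable A) (hV : Measurable V) (hU : Measurable U) (hZ : Measurable Z)
    (hε : Measurable ε) {g : 𝓐 × 𝓤 × 𝓔 → ℝ} {π : 𝓐 → ℝ} (hg : Measurable g) (hπ : Measurable π)
    (hZYindep : CondIndepFun
      (MeasurableSpace.comap (fun ω => (A ω, V ω, U ω)) inferInstance)
      (Measurable.comap_le (by fun_prop)) Z (fun ω => g (A ω, U ω, ε ω)) P)
    (hεAindep : CondIndepFun (MeasurableSpace.comap (fun ω => (V ω, U ω)) inferInstance)
      (Measurable.comap_le (by fun_prop)) ε A P)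
    {f : 𝓐 × 𝓥 × 𝓤 → ℝ} (hf : Measurable f) (hf_nonneg : ∀ x, 0 ≤ f x)
    (hf_density : ∀ φ : 𝓐 × 𝓥 × 𝓤 → ℝ, Measurable φ → (∃ C, ∀ x, |φ x| ≤ C) →
      ∫ ω, φ (A ω, V ω, U ω) ∂P = ∫ ω, (∫ a, φ (a, V ω, U ω) * f (a, V ω, U ω) ∂μA) ∂P)
    (hf_pos : ∀ᵐ x ∂(μA.prod P), π x.1 ≠ 0 → 0 < f (x.1, V x.2, U x.2))
    {q₀ : 𝓐 × 𝓥 × 𝓩 → ℝ} (hq₀ : Measurable q₀)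
    (hbridge : P[(fun ω => π (A ω) * q₀ (A ω, V ω, Z ω)) |
        MeasurableSpace.comap (fun ω => (A ω, V ω, U ω)) inferInstance]
      =ᵐ[P] fun ω => π (A ω) / f (A ω, V ω, U ω))
    (hIPWInt : Integrable (fun ω => g (A ω, U ω, ε ω) * π (A ω) * q₀ (A ω, V ω, Z ω)) P)
    (hbridgeInt : Integrable (fun ω => π (A ω) * q₀ (A ω, V ω, Z ω)) P)
    (hJInt : Integrable (fun x : 𝓐 × Ω => g (x.1, U x.2, ε x.2) * π x.1) (μA.prod P)) :
    ∫ ω, g (A ω, U ω, ε ω) * π (A ω) * q₀ (A ω, V ω, Z ω) ∂P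
      = ∫ ω, (∫ a, g (a, U ω, ε ω) * π a ∂μA) ∂P := by
  lift f to 𝓐 × 𝓥 × 𝓤 → ℝ≥0 using hf_nonneg
  replace hf : Measurable f := measurable_coe_nnreal_real_iff.1 hf
  have hVU : Measurable fun ω => (V ω, U ω) := hV.prodMk hU
  have hdensity : HasCondDensity A (fun ω => ((V ω, U ω), ε ω)) (fun z => f (z.1, z.2.1)) μA P :=
    (hasCondDensity_of_forall_integral_eq hA hVU hf hf_density).prodMk_of_condIndepFun hA hVU hε hf
      hεAindep.symm
  let φ : 𝓐 × (𝓥 × 𝓤) × 𝓔 → ℝ := fun z => g (z.1, z.2.1.2, z.2.2) * π z.1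
  have hφ : Measurable φ := by fun_prop
  have hφ_pos : ∀ᵐ x ∂μA.prod P,
      φ (x.1, (V x.2, U x.2), ε x.2) ≠ 0 → 0 < f (x.1, V x.2, U x.2) := by
    filter_upwards [hf_pos] with x hx hne
    exact hx (right_ne_zero_of_mul hne)
  have hratio_int : Integrable (fun ω => g (A ω, U ω, ε ω) * π (A ω) / f (A ω, V ω, U ω)) P :=
    (hdensity.integrable_div_density_iff hA (hVU.prodMk hε) (by fun_prop) hφ hφ_pos).2 hJInt
  calc ∫ ω, g (A ω, U ω, ε ω) * π (A ω) * q₀ (A ω, V ω, Z ω) ∂P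
      = ∫ ω, π (A ω) * q₀ (A ω, V ω, Z ω) * g (A ω, U ω, ε ω) ∂P := by
        congr with ω
        ring
    _ = ∫ ω, π (A ω) / f (A ω, V ω, U ω) * g (A ω, U ω, ε ω) ∂P :=
        integral_comp_mul_eq_of_condExp_ae_eq (hA.prodMk hVU) hZYindep hZ (by fun_prop)
          (q := fun z => π z.1.1 * q₀ (z.1.1, z.1.2.1, z.2)) (by fun_prop) hbridge hbridgeInt
          (hIPWInt.congr (ae_of_all _ fun ω => by ring))
          (hratio_int.congr (ae_of_all _ fun ω => by ring))
    _ = ∫ ω, g (A ω, U ω, ε ω) * π (A ω) / f (A ω, V ω, U ω) ∂P := by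
        congr with ω
        ring
    _ = ∫ x, g (x.1, U x.2, ε x.2) * π x.1 ∂μA.prod P :=
        hdensity.integral_div_density hA (hVU.prodMk hε) (by fun_prop) hφ hφ_pos
    _ = ∫ ω, (∫ a, g (a, U ω, ε ω) * π a ∂μA) ∂P := integral_prod_symm _ hJInt

/-- **Lemma 9, IPW part (ICC paper).** If `Z ⫫ Y | (A, Ṽ, U)`,
`ε ⫫ A | (Ṽ, U)`, `f` is a positive conditional density of `A` given `(Ṽ, U)`
w.r.t. `μ_A`, and `q₀` satisfies the structural action-bridge condition
`E[π(A) q₀(A,Ṽ,Z) | A, Ṽ, U] = π(A)/f(A,Ṽ,U)` a.s., then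
`E[Y π(A) q₀(A,Ṽ,Z)] = J := E[∫ g(a, U, ε) π(a) dμ_A(a)]`. -/
theorem icc_lemma9_ipw_bridge
    {Ω 𝓐 𝓤 𝓩 𝓔 : Type*}
    [MeasurableSpace Ω] [StandardBorelSpace Ω] [Nonempty Ω]
    [MeasurableSpace 𝓐] [StandardBorelSpace 𝓐]
    [MeasurableSpace 𝓤] [StandardBorelSpace 𝓤]
    [MeasurableSpace 𝓩] [StandardBorelSpace 𝓩]
    [MeasurableSpace 𝓔] [StandardBorelSpace 𝓔]
    (P : Measure Ω) [IsProbabilityMeasure P]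
    (μA : Measure 𝓐) [SigmaFinite μA]
    (A : Ω → 𝓐) (U : Ω → 𝓤) (Z : Ω → 𝓩) (ε : Ω → 𝓔)
    (hA : Measurable A) (hU : Measurable U) (hZ : Measurable Z) (hε : Measurable ε)
    (g : 𝓐 × 𝓤 × 𝓔 → ℝ) (π : 𝓐 → ℝ) (hg : Measurable g) (hπ : Measurable π)
    (v : 𝓐 × 𝓩 → ℝ) (hv : Measurable v)
    -- (i) Z ⫫ Y | (A, Ṽ, U), where Ṽ = v(A, Z) and Y = g(A, U, ε)
    (hZYindep : CondIndepFun
      (MeasurableSpace.comap (fun ω => (A ω, v (A ω, Z ω), U ω)) inferInstance)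
      (Measurable.comap_le (by fun_prop))
      Z (fun ω => g (A ω, U ω, ε ω)) P)
    -- (ii) ε ⫫ A | (Ṽ, U)
    (hεAindep : CondIndepFun
      (MeasurableSpace.comap (fun ω => (v (A ω, Z ω), U ω)) inferInstance)
      (Measurable.comap_le (by fun_prop)) ε A P)
    -- (iii) f is a conditional density of A given (Ṽ, U) w.r.t. μ_A,
    -- positive on the relevant support
    (f : 𝓐 × ℝ × 𝓤 → ℝ) (hf : Measurable f) (hf_nonneg : ∀ x, 0 ≤ f x)
    (hf_density : ∀ φ : 𝓐 × ℝ × 𝓤 → ℝ, Measurable φ → (∃ C, ∀ x, |φ x| ≤ C) →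
      ∫ ω, φ (A ω, v (A ω, Z ω), U ω) ∂P
        = ∫ ω, (∫ a, φ (a, v (A ω, Z ω), U ω) * f (a, v (A ω, Z ω), U ω) ∂μA) ∂P)
    (hf_pos : ∀ᵐ ω ∂P, 0 < f (A ω, v (A ω, Z ω), U ω))
    (hf_pos' : ∀ᵐ x ∂(μA.prod P), π x.1 ≠ 0 → 0 < f (x.1, v (A x.2, Z x.2), U x.2))
    -- (iv) structural action-bridge condition
    (q₀ : 𝓐 × ℝ × 𝓩 → ℝ) (hq₀ : Measurable q₀)
    (hbridge : P[(fun ω => π (A ω) * q₀ (A ω, v (A ω, Z ω), Z ω)) |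
        MeasurableSpace.comap (fun ω => (A ω, v (A ω, Z ω), U ω)) inferInstance]
      =ᵐ[P] fun ω => π (A ω) / f (A ω, v (A ω, Z ω), U ω))
    -- (v) integrability of all displayed integrands
    (hIPWInt : Integrable (fun ω => g (A ω, U ω, ε ω) * π (A ω)
      * q₀ (A ω, v (A ω, Z ω), Z ω)) P)
    (hbridgeInt : Integrable (fun ω => π (A ω) * q₀ (A ω, v (A ω, Z ω), Z ω)) P)
    (hratioInt : Integrable (fun ω => g (A ω, U ω, ε ω) * π (A ω)
      / f (A ω, v (A ω, Z ω), U ω)) P)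
    (hJInt : Integrable (fun x : 𝓐 × Ω => g (x.1, U x.2, ε x.2) * π x.1) (μA.prod P)) :
    ∫ ω, g (A ω, U ω, ε ω) * π (A ω) * q₀ (A ω, v (A ω, Z ω), Z ω) ∂P
      = ∫ ω, (∫ a, g (a, U ω, ε ω) * π a ∂μA) ∂P :=
  icc_lemma9_ipw_bridge_general hA (by fun_prop) hU hZ hε hg hπ hZYindep hεAindep hf hf_nonneg
    hf_density hf_pos' hq₀ hbridge hIPWInt hbridgeInt hJInt
end

section
/- Suppose the pair (W, Y) is conditionally independent of Z given (A, U), and h₀ : 𝓐 × ℝ × 𝓦 → ℝ is measurable with h₀(A, Ṽ, W) integrable and satisfies the structural outcome-bridge condition E[Y − h₀(A, Ṽ, W) | A, Ṽ, U] = 0 almost surely. Then the observable moment restriction holds: E[Y − h₀(A, Ṽ, W) | A, Ṽ, Z] = 0 almost surely. -/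
open MeasureTheory ProbabilityTheory

/-!
Write `X = ρ(A, Ṽ, W, Y)` for the residual, with `ρ(a, t, w, y) = y - h₀(a, t, w)` in the paper.
Since `(W, Y) ⫫ Z | (A, U)`, conditioning on `(A, U, Z)` integrates `(W, Y)` against its conditional
law given `(A, U)` alone, with `A` and `Ṽ = v(A, Z)` held fixed. The result is a function of
`(A, Ṽ, U)`, so `E[X | A, U, Z] = E[X | A, Ṽ, U] = 0`, and the tower property passes this on to the
smaller σ-algebra of `(A, Ṽ, Z)`.
-/

section TowerProperty

variable {Ω E : Type*} [NormedAddCommGroup E] [NormedSpace ℝ E] [CompleteSpace E]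
  {m₁ m₂ m₀ : MeasurableSpace Ω} {μ : Measure Ω} {X : Ω → E}

theorem condExp_ae_eq_zero_of_le_s13 (h₁₂ : m₁ ≤ m₂) (h₂ : m₂ ≤ m₀) [SigmaFinite (μ.trim h₂)]
    (hX : μ[X | m₂] =ᵐ[μ] 0) : μ[X | m₁] =ᵐ[μ] 0 :=
  calc μ[X | m₁] =ᵐ[μ] μ[μ[X | m₂] | m₁] := (condExp_condExp_of_le h₁₂ h₂).symm
    _ =ᵐ[μ] μ[0 | m₁] := condExp_congr_ae hX
    _ = 0 := condExp_zero

theorem condExp_ae_eq_condExp_of_aestronglyMeasurable (h₁₂ : m₁ ≤ m₂) (h₂ : m₂ ≤ m₀)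
    [SigmaFinite (μ.trim (h₁₂.trans h₂))] (hX : AEStronglyMeasurable[m₁] (μ[X | m₂]) μ) :
    μ[X | m₂] =ᵐ[μ] μ[X | m₁] :=
  have : SigmaFinite (μ.trim h₂) := sigmaFiniteTrim_mono h₂ h₁₂
  calc μ[X | m₂] =ᵐ[μ] μ[μ[X | m₂] | m₁] :=
        (condExp_of_aestronglyMeasurable' (h₁₂.trans h₂) hX integrable_condExp).symm
    _ =ᵐ[μ] μ[X | m₁] := condExp_condExp_of_le h₁₂ h₂

end TowerProperty

section CondIndepFun

variable {Ω α β γ δ E : Type*} [MeasurableSpace Ω] [StandardBorelSpace Ω]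
  [MeasurableSpace α] [StandardBorelSpace α] [MeasurableSpace β] [StandardBorelSpace β]
  [MeasurableSpace γ] [MeasurableSpace δ]
  [NormedAddCommGroup E] [NormedSpace ℝ E] [CompleteSpace E]
  {μ : Measure Ω} [IsFiniteMeasure μ] {f : Ω → α} {g : Ω → β} {k : Ω → γ}

theorem condExp_prodMk_ae_eq_integral_condDistrib_of_condIndepFun [Nonempty α] [Nonempty β]
    (hf : Measurable f) (hg : Measurable g) (hk : Measurable k) (hfg : f ⟂ᵢ[k, hk; μ] g)
    {φ : (γ × β) × α → E} (hφ : StronglyMeasurable φ)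
    (hint : Integrable (fun ω => φ ((k ω, g ω), f ω)) μ) :
    μ[fun ω => φ ((k ω, g ω), f ω) |
        MeasurableSpace.comap (fun ω => (k ω, g ω)) inferInstance]
      =ᵐ[μ] fun ω => ∫ x, φ ((k ω, g ω), x) ∂condDistrib f k μ (k ω) := by
  have hkg : Measurable fun ω => (k ω, g ω) := hk.prodMk hg
  have condDistrib_eq : ∀ᵐ ω ∂μ,
      condDistrib f (fun ω => (k ω, g ω)) μ (k ω, g ω) = condDistrib f k μ (k ω) :=
    ae_of_ae_map hkg.aemeasurable
      ((condIndepFun_iff_condDistrib_prod_ae_eq_prodMkRight hf hg hk).1 hfg.symm)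
  filter_upwards [condExp_prod_ae_eq_integral_condDistrib hkg hf.aemeasurable hφ hint,
    condDistrib_eq] with ω hω hdistrib
  rw [hω, hdistrib]

/-- Weak union: the σ-algebra of `c(k, g)` lies between those of `k` (recovered by `r`) and
`(k, g)`. -/
theorem condExp_prodMk_ae_eq_condExp_of_condIndepFun
    (hf : Measurable f) (hg : Measurable g) {c : γ × β → δ} (hc : Measurable c)
    {r : δ → γ} (hr : Measurable r) (hk : Measurable k) (hrc : ∀ ω, r (c (k ω, g ω)) = k ω)
    (hfg : f ⟂ᵢ[k, hk; μ] g) {φ : δ × α → E} (hφ : StronglyMeasurable φ)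
    (hint : Integrable (fun ω => φ (c (k ω, g ω), f ω)) μ) :
    μ[fun ω => φ (c (k ω, g ω), f ω) |
        MeasurableSpace.comap (fun ω => (k ω, g ω)) inferInstance]
      =ᵐ[μ] μ[fun ω => φ (c (k ω, g ω), f ω) |
        MeasurableSpace.comap (fun ω => c (k ω, g ω)) inferInstance] := by
  rcases isEmpty_or_nonempty Ω with hΩ | ⟨⟨ω₀⟩⟩
  · exact .of_forall hΩ.elim
  have : Nonempty α := ⟨f ω₀⟩
  have : Nonempty β := ⟨g ω₀⟩
  let G : δ → E := fun d => ∫ x, φ (d, x) ∂condDistrib f k μ (r d)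
  have hG : StronglyMeasurable G :=
    hφ.integral_kernel_prod_right' (κ := (condDistrib f k μ).comap r hr)
  have condExp_eq_G : μ[fun ω => φ (c (k ω, g ω), f ω) |
        MeasurableSpace.comap (fun ω => (k ω, g ω)) inferInstance]
      =ᵐ[μ] fun ω => G (c (k ω, g ω)) := by
    simpa only [G, hrc] using
      condExp_prodMk_ae_eq_integral_condDistrib_of_condIndepFun hf hg hk hfg
        (φ := fun p => φ (c p.1, p.2)) (hφ.comp_measurable (by fun_prop)) hint
  exact condExp_ae_eq_condExp_of_aestronglyMeasurable
    (hc.comp (comap_measurable _)).comap_le (hk.prodMk hg).comap_le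
    ⟨_, hG.comp_measurable (comap_measurable _), condExp_eq_G⟩

end CondIndepFun

theorem icc_lemma10_outcome_bridge_obs_general
    {Ω 𝓐 𝓤 𝓥 𝓩 𝓦 𝓨 E : Type*}
    [MeasurableSpace Ω] [StandardBorelSpace Ω]
    [MeasurableSpace 𝓐] [MeasurableSpace 𝓤] [MeasurableSpace 𝓥]
    [MeasurableSpace 𝓩] [StandardBorelSpace 𝓩]
    [MeasurableSpace 𝓦] [StandardBorelSpace 𝓦]
    [MeasurableSpace 𝓨] [StandardBorelSpace 𝓨]
    [NormedAddCommGroup E] [NormedSpace ℝ E] [CompleteSpace E]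
    {P : Measure Ω} [IsFiniteMeasure P]
    {A : Ω → 𝓐} {U : Ω → 𝓤} {Z : Ω → 𝓩} {W : Ω → 𝓦} {Y : Ω → 𝓨}
    (hA : Measurable A) (hU : Measurable U) (hZ : Measurable Z) (hW : Measurable W)
    (hY : Measurable Y) {v : 𝓐 × 𝓩 → 𝓥} (hv : Measurable v)
    (hindep : (fun ω => (W ω, Y ω)) ⟂ᵢ[fun ω => (A ω, U ω), hA.prodMk hU; P] Z)
    {ρ : 𝓐 × 𝓥 × 𝓦 × 𝓨 → E} (hρ : StronglyMeasurable ρ)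
    (hρInt : Integrable (fun ω => ρ (A ω, v (A ω, Z ω), W ω, Y ω)) P)
    (hbridge : P[fun ω => ρ (A ω, v (A ω, Z ω), W ω, Y ω) |
        MeasurableSpace.comap (fun ω => (A ω, v (A ω, Z ω), U ω)) inferInstance] =ᵐ[P] 0) :
    P[fun ω => ρ (A ω, v (A ω, Z ω), W ω, Y ω) |
        MeasurableSpace.comap (fun ω => (A ω, v (A ω, Z ω), Z ω)) inferInstance] =ᵐ[P] 0 := by
  have hAUZ : Measurable fun ω => ((A ω, U ω), Z ω) := by fun_prop
  have condExp_AUZ_eq_condExp_AVU :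
      P[fun ω => ρ (A ω, v (A ω, Z ω), W ω, Y ω) |
          MeasurableSpace.comap (fun ω => ((A ω, U ω), Z ω)) inferInstance]
        =ᵐ[P] P[fun ω => ρ (A ω, v (A ω, Z ω), W ω, Y ω) |
          MeasurableSpace.comap (fun ω => (A ω, v (A ω, Z ω), U ω)) inferInstance] :=
    condExp_prodMk_ae_eq_condExp_of_condIndepFun (hW.prodMk hY) hZ
      (c := fun p : (𝓐 × 𝓤) × 𝓩 => (p.1.1, v (p.1.1, p.2), p.1.2)) (by fun_prop)
      (r := fun q : 𝓐 × 𝓥 × 𝓤 => (q.1, q.2.2)) (by fun_prop)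
      (hA.prodMk hU) (fun _ => rfl) hindep
      (φ := fun p => ρ (p.1.1, p.1.2.1, p.2)) (hρ.comp_measurable (by fun_prop)) hρInt
  have comap_AVZ_le_comap_AUZ :
      MeasurableSpace.comap (fun ω => (A ω, v (A ω, Z ω), Z ω)) inferInstance
        ≤ MeasurableSpace.comap (fun ω => ((A ω, U ω), Z ω)) inferInstance := by
    have hc : Measurable fun p : (𝓐 × 𝓤) × 𝓩 => (p.1.1, v (p.1.1, p.2), p.2) := by fun_prop
    exact (hc.comp (comap_measurable fun ω => ((A ω, U ω), Z ω))).comap_le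
  exact condExp_ae_eq_zero_of_le_s13 comap_AVZ_le_comap_AUZ hAUZ.comap_le
    (condExp_AUZ_eq_condExp_AVU.trans hbridge)

/-- **Lemma 10, first equation (ICC paper).** If `(W, Y) ⫫ Z | (A, U)` and the
structural outcome-bridge condition `E[Y − h₀(A,Ṽ,W) | A, Ṽ, U] = 0` holds
a.s., then the observable moment restriction
`E[Y − h₀(A,Ṽ,W) | A, Ṽ, Z] = 0` holds a.s., with `Ṽ = v(A, Z)`. -/
theorem icc_lemma10_outcome_bridge_obs
    {Ω 𝓐 𝓤 𝓩 𝓦 : Type*}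
    [MeasurableSpace Ω] [StandardBorelSpace Ω] [Nonempty Ω]
    [MeasurableSpace 𝓐] [StandardBorelSpace 𝓐]
    [MeasurableSpace 𝓤] [StandardBorelSpace 𝓤]
    [MeasurableSpace 𝓩] [StandardBorelSpace 𝓩]
    [MeasurableSpace 𝓦] [StandardBorelSpace 𝓦]
    (P : Measure Ω) [IsProbabilityMeasure P]
    (A : Ω → 𝓐) (U : Ω → 𝓤) (Z : Ω → 𝓩) (W : Ω → 𝓦) (Y : Ω → ℝ)
    (hA : Measurable A) (hU : Measurable U) (hZ : Measurable Z) (hW : Measurable W)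
    (hY : Measurable Y) (hYInt : Integrable Y P)
    (v : 𝓐 × 𝓩 → ℝ) (hv : Measurable v)
    -- (W, Y) ⫫ Z | (A, U)
    (hindep : CondIndepFun
      (MeasurableSpace.comap (fun ω => (A ω, U ω)) inferInstance)
      (Measurable.comap_le (by fun_prop))
      (fun ω => (W ω, Y ω)) Z P)
    (h₀ : 𝓐 × ℝ × 𝓦 → ℝ) (hh₀ : Measurable h₀)
    (hh₀Int : Integrable (fun ω => h₀ (A ω, v (A ω, Z ω), W ω)) P)
    -- structural outcome-bridge condition: E[Y − h₀(A, Ṽ, W) | A, Ṽ, U] = 0 a.s.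
    (hbridge : P[(fun ω => Y ω - h₀ (A ω, v (A ω, Z ω), W ω)) |
        MeasurableSpace.comap (fun ω => (A ω, v (A ω, Z ω), U ω)) inferInstance]
      =ᵐ[P] 0) :
    -- observable moment restriction: E[Y − h₀(A, Ṽ, W) | A, Ṽ, Z] = 0 a.s.
    P[(fun ω => Y ω - h₀ (A ω, v (A ω, Z ω), W ω)) |
        MeasurableSpace.comap (fun ω => (A ω, v (A ω, Z ω), Z ω)) inferInstance]
      =ᵐ[P] 0 := by
  exact icc_lemma10_outcome_bridge_obs_general hA hU hZ hW hY hv hindep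
    (ρ := fun p => p.2.2.2 - h₀ (p.1, p.2.1, p.2.2.1))
    (Measurable.stronglyMeasurable (by fun_prop)) (hYInt.sub hh₀Int) hbridge
end

section
/- Suppose h₀ : 𝓐 × ℝ × 𝓦 → ℝ is measurable with h₀(A, Ṽ, W) integrable and satisfies the observable moment restriction E[Y − h₀(A, Ṽ, W) | A, Ṽ, Z] = 0 almost surely. Then for every measurable q : 𝓐 × ℝ × 𝓩 → ℝ such that (Y − h₀(A, Ṽ, W))·π(A)·q(A, Ṽ, Z) is integrable and (a, ω) ↦ h₀(a, Ṽ(ω), W(ω))π(a) is μ_A ⊗ ℙ-integrable, the doubly robust functional reduces to the regression functional: E[(Y − h₀(A, Ṽ, W))·π(A)·q(A, Ṽ, Z) + ∫_𝓐 h₀(a, Ṽ, W) π(a) dμ_A(a)] = E[∫_𝓐 h₀(a, Ṽ, W) π(a) dμ_A(a)]. -/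
open MeasureTheory ProbabilityTheory

section CondExpOrthogonality

variable {Ω E F G : Type*} {m mΩ : MeasurableSpace Ω} {μ : Measure Ω}
  [NormedAddCommGroup E] [NormedSpace ℝ E]
  [NormedAddCommGroup F] [NormedSpace ℝ F] [CompleteSpace F]
  [NormedAddCommGroup G] [NormedSpace ℝ G] [CompleteSpace G]
  (B : F →L[ℝ] E →L[ℝ] G)

theorem integral_bilin_eq_zero_of_condExp_ae_eq_zero (hm : m ≤ mΩ) [SigmaFinite (μ.trim hm)]
    {f : Ω → F} {g : Ω → E} (hf : Integrable f μ) (hg : AEStronglyMeasurable[m] g μ)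
    (hfg : Integrable (fun ω ↦ B (f ω) (g ω)) μ) (hf_zero : μ[f | m] =ᵐ[μ] 0) :
    ∫ ω, B (f ω) (g ω) ∂μ = 0 := by
  have condExp_zero : μ[fun ω ↦ B (f ω) (g ω) | m] =ᵐ[μ] 0 := by
    filter_upwards [condExp_bilin_of_aestronglyMeasurable_right B hg hfg hf, hf_zero]
      with ω h_pull_out h_zero
    simp [h_pull_out, h_zero]
  rw [← integral_condExp hm, integral_eq_zero_of_ae condExp_zero]

theorem integral_bilin_comp_eq_zero_of_condExp_comap_ae_eq_zero
    {S : Type*} [mS : MeasurableSpace S] {X : Ω → S} (hX : Measurable X)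
    [SigmaFinite (μ.trim hX.comap_le)] {f : Ω → F} {g : S → E}
    (hf : Integrable f μ) (hg : StronglyMeasurable g)
    (hfg : Integrable (fun ω ↦ B (f ω) (g (X ω))) μ) (hf_zero : μ[f | mS.comap X] =ᵐ[μ] 0) :
    ∫ ω, B (f ω) (g (X ω)) ∂μ = 0 :=
  integral_bilin_eq_zero_of_condExp_ae_eq_zero B hX.comap_le hf
    (hg.comp_measurable (comap_measurable X)).aestronglyMeasurable hfg hf_zero

end CondExpOrthogonality

theorem icc_theorem4_dr_h_side_general
    {Ω 𝓐 𝓥 𝓩 𝓦 : Type*} [MeasurableSpace Ω]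
    [MeasurableSpace 𝓐] [MeasurableSpace 𝓥] [MeasurableSpace 𝓩]
    {P : Measure Ω} [IsFiniteMeasure P] {μA : Measure 𝓐} [SFinite μA]
    {A : Ω → 𝓐} {V : Ω → 𝓥} {Z : Ω → 𝓩} {W : Ω → 𝓦} {Y : Ω → ℝ}
    (hA : Measurable A) (hV : Measurable V) (hZ : Measurable Z)
    {π : 𝓐 → ℝ} (hπ : Measurable π) {h₀ : 𝓐 × 𝓥 × 𝓦 → ℝ}
    (hres : Integrable (fun ω ↦ Y ω - h₀ (A ω, V ω, W ω)) P)
    (hobs : P[(fun ω ↦ Y ω - h₀ (A ω, V ω, W ω)) |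
        MeasurableSpace.comap (fun ω ↦ (A ω, V ω, Z ω)) inferInstance] =ᵐ[P] 0)
    {q : 𝓐 × 𝓥 × 𝓩 → ℝ} (hq : Measurable q)
    (hcorr : Integrable
      (fun ω ↦ (Y ω - h₀ (A ω, V ω, W ω)) * π (A ω) * q (A ω, V ω, Z ω)) P)
    (hreg : Integrable (fun x : 𝓐 × Ω ↦ h₀ (x.1, V x.2, W x.2) * π x.1) (μA.prod P)) :
    ∫ ω, ((Y ω - h₀ (A ω, V ω, W ω)) * π (A ω) * q (A ω, V ω, Z ω)
          + ∫ a, h₀ (a, V ω, W ω) * π a ∂μA) ∂P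
      = ∫ ω, (∫ a, h₀ (a, V ω, W ω) * π a ∂μA) ∂P := by
  have weight_measurable : Measurable fun x : 𝓐 × 𝓥 × 𝓩 ↦ π x.1 * q x := by fun_prop
  have correction_zero :
      ∫ ω, (Y ω - h₀ (A ω, V ω, W ω)) * π (A ω) * q (A ω, V ω, Z ω) ∂P = 0 := by
    simp only [mul_assoc] at hcorr ⊢
    exact integral_bilin_comp_eq_zero_of_condExp_comap_ae_eq_zero (.mul ℝ ℝ)
      (hA.prodMk (hV.prodMk hZ)) hres weight_measurable.stronglyMeasurable hcorr hobs
  rw [integral_add hcorr hreg.integral_prod_right, correction_zero, zero_add]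

/-- **Theorem 4, h-side double robustness (ICC paper).** If `h₀` satisfies the
observable moment restriction `E[Y − h₀(A,Ṽ,W) | A, Ṽ, Z] = 0` a.s., then for
every suitable weighting function `q` the doubly robust functional reduces to
the regression functional:
`E[(Y − h₀(A,Ṽ,W)) π(A) q(A,Ṽ,Z) + ∫ h₀(a,Ṽ,W) π(a) dμ_A(a)]
  = E[∫ h₀(a,Ṽ,W) π(a) dμ_A(a)]`. -/
theorem icc_theorem4_dr_h_side
    {Ω 𝓐 𝓩 𝓦 : Type*}
    [MeasurableSpace Ω] [StandardBorelSpace Ω] [Nonempty Ω]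
    [MeasurableSpace 𝓐] [StandardBorelSpace 𝓐]
    [MeasurableSpace 𝓩] [StandardBorelSpace 𝓩]
    [MeasurableSpace 𝓦] [StandardBorelSpace 𝓦]
    (P : Measure Ω) [IsProbabilityMeasure P]
    (μA : Measure 𝓐) [SigmaFinite μA]
    (A : Ω → 𝓐) (Z : Ω → 𝓩) (W : Ω → 𝓦) (Y : Ω → ℝ)
    (hA : Measurable A) (hZ : Measurable Z) (hW : Measurable W)
    (hY : Measurable Y) (hYInt : Integrable Y P)
    (π : 𝓐 → ℝ) (hπ : Measurable π)
    (v : 𝓐 × 𝓩 → ℝ) (hv : Measurable v)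
    (h₀ : 𝓐 × ℝ × 𝓦 → ℝ) (hh₀ : Measurable h₀)
    (hh₀Int : Integrable (fun ω => h₀ (A ω, v (A ω, Z ω), W ω)) P)
    -- observable moment restriction: E[Y − h₀(A, Ṽ, W) | A, Ṽ, Z] = 0 a.s.
    (hobs : P[(fun ω => Y ω - h₀ (A ω, v (A ω, Z ω), W ω)) |
        MeasurableSpace.comap (fun ω => (A ω, v (A ω, Z ω), Z ω)) inferInstance]
      =ᵐ[P] 0) :
    ∀ q : 𝓐 × ℝ × 𝓩 → ℝ, Measurable q →
      Integrable (fun ω => (Y ω - h₀ (A ω, v (A ω, Z ω), W ω)) * π (A ω)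
        * q (A ω, v (A ω, Z ω), Z ω)) P →
      Integrable (fun x : 𝓐 × Ω => h₀ (x.1, v (A x.2, Z x.2), W x.2) * π x.1)
        (μA.prod P) →
      ∫ ω, ((Y ω - h₀ (A ω, v (A ω, Z ω), W ω)) * π (A ω)
              * q (A ω, v (A ω, Z ω), Z ω)
            + ∫ a, h₀ (a, v (A ω, Z ω), W ω) * π a ∂μA) ∂P
        = ∫ ω, (∫ a, h₀ (a, v (A ω, Z ω), W ω) * π a ∂μA) ∂P := fun _ hq hcorr hreg ↦
  icc_theorem4_dr_h_side_general hA (hv.comp (hA.prodMk hZ)) hZ hπ (hYInt.sub hh₀Int) hobs hq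
    hcorr hreg
end
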